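/- arXiv:2005.04521 — 4 statements merged into one kernel-verified Lean document; each statement's English description precedes it below -/
import Mathlib

section
/- Let K be a number field with ring of integers O_K. For a nonzero ideal I of O_K let N(I) = #(O_K/I) and φ_K(I) = #(O_K/I)^×. Then for every complex number s with Re(s) > 1, ∑_I φ_K(I)^{−s} = (∑_I N(I)^{−s}) · ∏_P (1 + (N(P)−1)^{−s} − N(P)^{−s}), where both sums run over all nonzero ideals I of O_K, the product runs over all nonzero prime ideals P of O_K, and all powers are principal-branch complex powers; moreover both sums and the product converge for such s. -/
open NumberField

lemma card_units_quot_prime_pow {R : Type*} [CommRing R] [IsDedekindDomain R]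
    (P : Ideal R) [P.IsMaximal] (n : ℕ) (hn : n ≠ 0) [Finite (R ⧸ P ^ n)] :
    Nat.card (R ⧸ P ^ n)ˣ * Nat.card (R ⧸ P) =
      Nat.card (R ⧸ P ^ n) * (Nat.card (R ⧸ P) - 1) := by
  have hle : P ^ n ≤ P := Ideal.pow_le_self hn
  let f : R ⧸ P ^ n →+* R ⧸ P := Ideal.Quotient.factor hle
  have hf : Function.Surjective f := Ideal.Quotient.factor_surjective hle
  have hfin : Finite (R ⧸ P) := Finite.of_surjective f hf
  have hu : ∀ x : R ⧸ P ^ n, IsUnit x ↔ f x ≠ 0 := by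
    intro x
    have hnil : IsNilpotent (RingHom.ker f) := by
      refine ⟨n, ?_⟩
      rw [Ideal.Quotient.factor_ker, ← Ideal.map_pow]
      simp
    let := Ideal.Quotient.field P
    rw [← isUnit_iff_ne_zero]
    constructor
    · exact fun h => h.map f
    · intro h
      have := (RingHom.quotientKerEquivOfSurjective hf).symm
      rw [← IsNilpotent.isUnit_quotient_mk_iff hnil]
      have h2 := h.map (RingHom.quotientKerEquivOfSurjective hf).symm
      convert h2
      rw [RingEquiv.eq_symm_apply]
      rfl
  have hk := AddSubgroup.card_eq_card_quotient_mul_card_addSubgroup (f : R ⧸ P ^ n →+ R ⧸ P).ker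
  rw [Nat.card_congr (QuotientAddGroup.quotientKerEquivOfSurjective (f : R ⧸ P ^ n →+ R ⧸ P) hf).toEquiv] at hk
  have hc : Nat.card (R ⧸ P ^ n)ˣ + Nat.card (f : R ⧸ P ^ n →+ R ⧸ P).ker = Nat.card (R ⧸ P ^ n) := by
    rw [Nat.card_congr (Equiv.ofInjective (Units.val : (R ⧸ P ^ n)ˣ → _) Units.val_injective)]
    have h1 : Set.range (Units.val : (R ⧸ P ^ n)ˣ → _) = ((f : R ⧸ P ^ n →+ R ⧸ P).ker : Set (R ⧸ P ^ n))ᶜ := by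
      ext x
      have := hu x
      simp only [Set.mem_range, Set.mem_compl_iff, SetLike.mem_coe, AddMonoidHom.mem_ker]
      exact this
    rw [h1, ← Set.ncard_add_ncard_compl ((f : R ⧸ P ^ n →+ R ⧸ P).ker : Set (R ⧸ P ^ n)), add_comm]
    rfl
  have hq : 0 < Nat.card (R ⧸ P) := Nat.card_pos
  obtain ⟨q, hq'⟩ := Nat.exists_eq_succ_of_ne_zero hq.ne'
  rw [hq'] at hk ⊢
  simp only [Nat.succ_eq_add_one, Nat.add_sub_cancel] at hk ⊢
  have hX : Nat.card (R ⧸ P ^ n)ˣ = q * Nat.card (f : R ⧸ P ^ n →+ R ⧸ P).ker := by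
    rw [hk] at hc; nlinarith
  rw [hX, hk]; ring

open UniqueFactorizationMonoid in
open scoped Classical in
lemma card_units_quot {R : Type*} [CommRing R] [IsDedekindDomain R]
    (J : Ideal R) (hJ : J ≠ ⊥) (hfin : ∀ I : Ideal R, I ≠ ⊥ → Finite (R ⧸ I)) :
    Nat.card (R ⧸ J)ˣ * ∏ P ∈ (factors J).toFinset, Nat.card (R ⧸ P) =
      Nat.card (R ⧸ J) * ∏ P ∈ (factors J).toFinset, (Nat.card (R ⧸ P) - 1) := by
  let e := IsDedekindDomain.quotientEquivPiFactors hJ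
  rw [Nat.card_congr e.toEquiv, Nat.card_congr (Units.mapEquiv e.toMulEquiv).toEquiv,
    Nat.card_congr MulEquiv.piUnits.toEquiv, Nat.card_pi, Nat.card_pi,
    ← Finset.prod_coe_sort _ (fun P => Nat.card (R ⧸ P)),
    ← Finset.prod_coe_sort _ (fun P => Nat.card (R ⧸ P) - 1), ← Finset.prod_mul_distrib,
    ← Finset.prod_mul_distrib]
  refine Finset.prod_congr rfl fun P _ => ?_
  have hmem := Multiset.mem_toFinset.mp P.2
  have hP : Prime P.1 := prime_of_factor _ hmem
  have : P.1.IsPrime := Ideal.isPrime_of_prime hP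
  have : P.1.IsMaximal := this.isMaximal hP.ne_zero
  have : Finite (R ⧸ P.1 ^ (Multiset.count P.1 (factors J))) := hfin _ (pow_ne_zero _ hP.ne_zero)
  exact card_units_quot_prime_pow P.1 _ (Multiset.count_ne_zero.mpr hmem)

open Filter Ideal in
lemma summable_absNorm_rpow (K : Type*) [Field K] [NumberField K] (σ : ℝ) (hs : 1 < σ) :
    Summable (fun I : {I : Ideal (𝓞 K) // I ≠ ⊥} => (absNorm I.1 : ℝ) ^ (-σ)) := by
  have hL : LSeriesSummable
      (fun n ↦ (((Nat.card {I : Ideal (𝓞 K) // absNorm I = n} : ℕ) : ℝ) : ℂ)) (σ : ℂ) := by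
    refine LSeriesSummable_of_sum_norm_bigO_and_nonneg (r := 1)
      (f := fun n ↦ ((Nat.card {I : Ideal (𝓞 K) // absNorm I = n} : ℕ) : ℝ)) ?_
      (fun _ ↦ Nat.cast_nonneg _) zero_le_one (by simpa using hs)
    refine Asymptotics.isBigO_atTop_natCast_rpow_of_tendsto_div_rpow 
      (a := (dedekindZeta_residue K)) ?_
    simp only [Real.rpow_one]
    refine ((Ideal.tendsto_norm_le_div_atTop₀ K).comp tendsto_natCast_atTop_atTop).congr fun n ↦ ?_
    simp only [Function.comp_apply, Nat.cast_le, ← Nat.cast_sum]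
    congr
    rw [← add_left_inj 1, ← card_norm_le_eq_card_norm_le_add_one,
      show Finset.Icc 1 n = Finset.Ioc 0 n from Finset.Icc_succ_left_eq_Ioc _ _,
      show 1 = Nat.card {I : Ideal (𝓞 K) // absNorm I = 0} by simp [Ideal.absNorm_eq_zero_iff],
      Finset.sum_Ioc_add_eq_sum_Icc (n.zero_le),
      ← Finset.card_preimage_eq_sum_card_image_eq (fun k _ ↦ finite_setOfPred_absNorm_eq k)]
    simp [Set.coe_eq_subtype]
  suffices h : Summable (fun I : Ideal (𝓞 K) => (absNorm I : ℝ) ^ (-σ)) from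
    h.comp_injective Subtype.val_injective
  rw [← (Equiv.sigmaFiberEquiv (fun I : Ideal (𝓞 K) => absNorm I)).summable_iff,
    summable_sigma_of_nonneg (fun _ => by dsimp; positivity)]
  have hfin : ∀ n, Finite {I : Ideal (𝓞 K) // absNorm I = n} := fun n =>
    finite_setOfPred_absNorm_eq n
  refine ⟨fun n => Summable.of_finite, ?_⟩
  refine hL.norm.congr fun n => ?_
  have : ∀ x : {I : Ideal (𝓞 K) // absNorm I = n},
    ((fun I : Ideal (𝓞 K) => (absNorm I : ℝ) ^ (-σ)) ∘ (Equiv.sigmaFiberEquiv (fun I : Ideal (𝓞 K) => absNorm I))) ⟨n, x⟩ = (n : ℝ) ^ (-σ) := by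
    rintro ⟨I, hI⟩
    simp [Equiv.sigmaFiberEquiv, hI]
  simp only [this, tsum_const, nsmul_eq_mul]
  rcases eq_or_ne n 0 with rfl | hn
  · simp [Real.zero_rpow (show -σ ≠ 0 by linarith)]
  · rw [LSeries.norm_term_eq, if_neg hn]
    simp [Real.rpow_neg, div_eq_mul_inv]

lemma hasSum_mul_of_norm {α β : Type*} {f : α → ℂ} {g : β → ℂ} (hf : Summable (fun a => ‖f a‖))
    (hg : Summable (fun b => ‖g b‖)) :
    HasSum (fun x : α × β => f x.1 * g x.2) ((∑' a, f a) * ∑' b, g b) :=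
  hf.of_norm.hasSum.mul hg.of_norm.hasSum (summable_mul_of_summable_norm hf hg)

lemma natCast_prod_cpow {ι : Type*} (S : Finset ι) (f : ι → ℕ) (s : ℂ) :
    ((∏ i ∈ S, f i : ℕ) : ℂ) ^ s = ∏ i ∈ S, (f i : ℂ) ^ s := by
  classical
  induction S using Finset.induction_on with
  | empty => simp
  | insert a S ha ih =>
    rw [Finset.prod_insert ha, Finset.prod_insert ha, Nat.cast_mul,
      Complex.natCast_mul_natCast_cpow, ih]

section
variable {K : Type*} [Field K] [NumberField K]

open UniqueFactorizationMonoid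

open scoped Classical in
/-- The finset of nonzero primes dividing `J`. -/
noncomputable def primesOf (J : Ideal (𝓞 K)) : Finset {P : Ideal (𝓞 K) // P.IsPrime ∧ P ≠ ⊥} :=
  (factors J).toFinset.subtype _

lemma prime_of_sub (P : {P : Ideal (𝓞 K) // P.IsPrime ∧ P ≠ ⊥}) : Prime P.1 :=
  Ideal.prime_of_isPrime P.2.2 P.2.1

lemma mem_primesOf {J : Ideal (𝓞 K)} (hJ : J ≠ ⊥) (P : {P : Ideal (𝓞 K) // P.IsPrime ∧ P ≠ ⊥}) :
    P ∈ primesOf J ↔ P.1 ∣ J := by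
  simp only [primesOf, Finset.mem_subtype, Multiset.mem_toFinset]
  constructor
  · exact dvd_of_mem_factors
  · intro h
    obtain ⟨q, hq, h2⟩ := exists_mem_factors_of_dvd hJ (prime_of_sub P).irreducible h
    rwa [associated_iff_eq.mp h2]

lemma prod_primesOf {M : Type*} [CommMonoid M] (J : Ideal (𝓞 K)) (f : Ideal (𝓞 K) → M) :
    open scoped Classical in
    ∏ P ∈ (factors J).toFinset, f P = ∏ P ∈ primesOf J, f P.1 := by
  classical
  rw [primesOf, Finset.prod_subtype_of_mem]
  intro P hP
  have := prime_of_factor _ (Multiset.mem_toFinset.mp hP)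
  exact ⟨Ideal.isPrime_of_prime this, this.ne_zero⟩

lemma primeProd_dvd_iff {J : Ideal (𝓞 K)} (hJ : J ≠ ⊥)
    (S : Finset {P : Ideal (𝓞 K) // P.IsPrime ∧ P ≠ ⊥}) :
    ∏ P ∈ S, P.1 ∣ J ↔ S ⊆ primesOf J := by
  constructor
  · intro h P hP
    rw [mem_primesOf hJ]
    exact (Finset.dvd_prod_of_mem _ hP).trans h
  · intro h
    have := Finset.prod_primes_dvd (s := S.map (Function.Embedding.subtype _)) J
      (by simp only [Finset.mem_map]; rintro _ ⟨P, -, rfl⟩; exact prime_of_sub P)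
      (by simp only [Finset.mem_map]; rintro _ ⟨P, hP, rfl⟩; exact (mem_primesOf hJ P).1 (h hP))
    simpa using this

lemma prod_ne_bot (S : Finset {P : Ideal (𝓞 K) // P.IsPrime ∧ P ≠ ⊥}) : ∏ P ∈ S, P.1 ≠ ⊥ :=
  Finset.prod_ne_zero_iff.mpr fun P _ => P.2.2

/-- Multiplication map. -/
noncomputable def mulMap (x : {I : Ideal (𝓞 K) // I ≠ ⊥} ×
    Finset {P : Ideal (𝓞 K) // P.IsPrime ∧ P ≠ ⊥}) : {I : Ideal (𝓞 K) // I ≠ ⊥} :=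
  ⟨x.1.1 * ∏ P ∈ x.2, P.1, mul_ne_zero x.1.2 (prod_ne_bot x.2)⟩

/-- The fiber of the multiplication map. -/
noncomputable def fiberEquiv (J : {I : Ideal (𝓞 K) // I ≠ ⊥}) :
    {x // mulMap x = J} ≃ {S // S ∈ (primesOf J.1).powerset} := by
  refine Equiv.ofBijective (fun x => ⟨x.1.2, ?_⟩) ⟨?_, ?_⟩
  · rw [Finset.mem_powerset, ← primeProd_dvd_iff J.2]
    exact Dvd.intro_left _ (congrArg Subtype.val x.2)
  · rintro ⟨⟨I, S⟩, h⟩ ⟨⟨I', S'⟩, h'⟩ hS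
    obtain rfl : S = S' := by simpa using hS
    have h2 : I.1 * ∏ P ∈ S, P.1 = I'.1 * ∏ P ∈ S, P.1 := congrArg Subtype.val (h.trans h'.symm)
    have := mul_right_cancel₀ (prod_ne_bot S) h2
    obtain rfl := Subtype.ext this
    rfl
  · rintro ⟨S, hS⟩
    rw [Finset.mem_powerset, ← primeProd_dvd_iff J.2] at hS
    obtain ⟨I, hI⟩ := hS
    refine ⟨⟨⟨⟨I, ?_⟩, S⟩, ?_⟩, rfl⟩
    · rintro rfl
      exact J.2 (by rw [hI]; exact mul_zero _)
    · exact Subtype.ext ((mul_comm _ _).trans hI.symm)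

lemma finite_quot (I : Ideal (𝓞 K)) (hI : I ≠ ⊥) : Finite (𝓞 K ⧸ I) :=
  Ideal.finiteQuotientOfFreeOfNeBot I hI

lemma two_le_card (P : {P : Ideal (𝓞 K) // P.IsPrime ∧ P ≠ ⊥}) : 2 ≤ Nat.card (𝓞 K ⧸ P.1) := by
  have := finite_quot P.1 P.2.2
  have : Nontrivial (𝓞 K ⧸ P.1) := Ideal.Quotient.nontrivial_iff.mpr P.2.1.ne_top
  exact Finite.one_lt_card

lemma totient_cpow (s : ℂ) (J : {I : Ideal (𝓞 K) // I ≠ ⊥}) :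
    (Nat.card (𝓞 K ⧸ J.1)ˣ : ℂ) ^ (-s) = ∑ S ∈ (primesOf J.1).powerset,
      (Nat.card (𝓞 K ⧸ J.1) : ℂ) ^ (-s) * ∏ P ∈ S,
       ((((Nat.card (𝓞 K ⧸ P.1) : ℂ) - 1) ^ (-s) - (Nat.card (𝓞 K ⧸ P.1) : ℂ) ^ (-s)) /
        (Nat.card (𝓞 K ⧸ P.1) : ℂ) ^ (-s)) := by
  have h := card_units_quot J.1 J.2 finite_quot
  rw [prod_primesOf _ (fun P => Nat.card (𝓞 K ⧸ P)),
    prod_primesOf _ (fun P => Nat.card (𝓞 K ⧸ P) - 1)] at h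
  have h2 := congrArg (fun n : ℕ => (n : ℂ) ^ (-s)) h
  simp only [Nat.cast_mul] at h2
  rw [Complex.natCast_mul_natCast_cpow, Complex.natCast_mul_natCast_cpow, natCast_prod_cpow,
    natCast_prod_cpow] at h2
  have hne : ∀ P : {P : Ideal (𝓞 K) // P.IsPrime ∧ P ≠ ⊥},
      (Nat.card (𝓞 K ⧸ P.1) : ℂ) ^ (-s) ≠ 0 := fun P => by
    have := two_le_card P
    rw [Complex.cpow_ne_zero_iff]
    left
    exact_mod_cast (by lia : Nat.card (𝓞 K ⧸ P.1) ≠ 0)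
  rw [← Finset.mul_sum, ← Finset.prod_one_add,
    ← mul_left_inj' (Finset.prod_ne_zero_iff.mpr fun P (_ : P ∈ primesOf J.1) => hne P), h2,
    mul_assoc, ← Finset.prod_mul_distrib]
  congr 1
  refine Finset.prod_congr rfl fun P _ => ?_
  have := two_le_card P
  have := hne P
  rw [Nat.cast_sub (by lia)]
  field_simp
  simp

end

/-- For a number field `K`, with norm `N(I) = #(𝓞 K / I)` and Euler function
`φ_K(I) = #(𝓞 K / I)ˣ`, and for every complex `s` with `Re(s) > 1`:
the totient zeta series, the Dedekind zeta series and the Euler product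
`∏_P (1 + (N(P)−1)^{−s} − N(P)^{−s})` all converge, and
`∑_I φ_K(I)^{−s} = (∑_I N(I)^{−s}) · ∏_P (1 + (N(P)−1)^{−s} − N(P)^{−s})`. -/
theorem numberField_totient_zeta_eq_zeta_mul_euler_product
    (K : Type*) [Field K] [NumberField K] (s : ℂ) (hs : 1 < s.re) :
    Summable (fun I : {I : Ideal (𝓞 K) // I ≠ ⊥} =>
      (Nat.card ((𝓞 K ⧸ I.1)ˣ) : ℂ) ^ (-s)) ∧
    Summable (fun I : {I : Ideal (𝓞 K) // I ≠ ⊥} =>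
      (Nat.card (𝓞 K ⧸ I.1) : ℂ) ^ (-s)) ∧
    Multipliable (fun P : {P : Ideal (𝓞 K) // P.IsPrime ∧ P ≠ ⊥} =>
      1 + ((Nat.card (𝓞 K ⧸ P.1) : ℂ) - 1) ^ (-s) - (Nat.card (𝓞 K ⧸ P.1) : ℂ) ^ (-s)) ∧
    (∑' I : {I : Ideal (𝓞 K) // I ≠ ⊥}, (Nat.card ((𝓞 K ⧸ I.1)ˣ) : ℂ) ^ (-s)) =
      (∑' I : {I : Ideal (𝓞 K) // I ≠ ⊥}, (Nat.card (𝓞 K ⧸ I.1) : ℂ) ^ (-s)) *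
      (∏' P : {P : Ideal (𝓞 K) // P.IsPrime ∧ P ≠ ⊥},
        (1 + ((Nat.card (𝓞 K ⧸ P.1) : ℂ) - 1) ^ (-s) - (Nat.card (𝓞 K ⧸ P.1) : ℂ) ^ (-s))) := by
  have hcard : ∀ I : {I : Ideal (𝓞 K) // I ≠ ⊥}, 0 < Nat.card (𝓞 K ⧸ I.1) := fun I => by
    have := finite_quot I.1 I.2
    exact Nat.card_pos
  have hR : Summable (fun I : {I : Ideal (𝓞 K) // I ≠ ⊥} =>
      (Nat.card (𝓞 K ⧸ I.1) : ℝ) ^ (-s.re)) := summable_absNorm_rpow K s.re hs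
  have hN : Summable (fun I : {I : Ideal (𝓞 K) // I ≠ ⊥} =>
      ‖(Nat.card (𝓞 K ⧸ I.1) : ℂ) ^ (-s)‖) := by
    refine hR.congr fun I => ?_
    rw [Complex.norm_natCast_cpow_of_pos (hcard I), Complex.neg_re]
  let h : {P : Ideal (𝓞 K) // P.IsPrime ∧ P ≠ ⊥} → ℂ := fun P =>
    ((Nat.card (𝓞 K ⧸ P.1) : ℂ) - 1) ^ (-s) - (Nat.card (𝓞 K ⧸ P.1) : ℂ) ^ (-s)
  have hh : Summable (fun P => ‖h P‖) := by
    have hinj : Function.Injective (fun P : {P : Ideal (𝓞 K) // P.IsPrime ∧ P ≠ ⊥} =>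
        (⟨P.1, P.2.2⟩ : {I : Ideal (𝓞 K) // I ≠ ⊥})) :=
      fun P Q hPQ => Subtype.ext (congrArg (fun I : {I : Ideal (𝓞 K) // I ≠ ⊥} => I.1) hPQ)
    have hP : Summable (fun P : {P : Ideal (𝓞 K) // P.IsPrime ∧ P ≠ ⊥} =>
      (Nat.card (𝓞 K ⧸ P.1) : ℝ) ^ (-s.re)) :=
      (hR.comp_injective hinj :)
    refine (hP.mul_left ((2 : ℝ) ^ s.re + 1)).of_nonneg_of_le (fun _ => norm_nonneg _) fun P => ?_
    have h2 := two_le_card P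
    refine (norm_sub_le _ _).trans ?_
    rw [← Nat.cast_one, ← Nat.cast_sub (by lia), Complex.norm_natCast_cpow_of_pos (by lia),
      Complex.norm_natCast_cpow_of_pos (by lia), Complex.neg_re, add_mul, one_mul]
    refine add_le_add_left ?_ _
    have h2' : (2 : ℝ) ≤ Nat.card (𝓞 K ⧸ P.1) := by exact_mod_cast h2
    rw [show (2 : ℝ) ^ s.re = (1 / 2 : ℝ) ^ (-s.re) by
        rw [Real.rpow_neg (by norm_num), one_div, Real.inv_rpow (by norm_num), inv_inv],
      ← Real.mul_rpow (by norm_num) (by positivity)]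
    refine Real.rpow_le_rpow_of_nonpos (by linarith) ?_ (by linarith)
    rw [Nat.cast_sub (by lia)]
    push_cast
    linarith
  have heq : (fun P : {P : Ideal (𝓞 K) // P.IsPrime ∧ P ≠ ⊥} =>
      1 + ((Nat.card (𝓞 K ⧸ P.1) : ℂ) - 1) ^ (-s) - (Nat.card (𝓞 K ⧸ P.1) : ℂ) ^ (-s)) =
      fun P => 1 + h P := by
    funext P
    simp only [h, add_sub_assoc]
  have hprodn : Summable (fun S => ‖∏ P ∈ S, h P‖) := by
    simp only [norm_prod]
    exact summable_finsetProd_of_summable_nonneg (fun _ => norm_nonneg _) hh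
  have hmain : HasSum (fun I : {I : Ideal (𝓞 K) // I ≠ ⊥} =>
      (Nat.card ((𝓞 K ⧸ I.1)ˣ) : ℂ) ^ (-s))
      ((∑' I : {I : Ideal (𝓞 K) // I ≠ ⊥}, (Nat.card (𝓞 K ⧸ I.1) : ℂ) ^ (-s)) *
        ∑' S, ∏ P ∈ S, h P) := by
    have hm := hasSum_mul_of_norm hN hprodn
    rw [← (Equiv.sigmaFiberEquiv (mulMap (K := K))).hasSum_iff] at hm
    refine hm.sigma fun J => ?_
    rw [totient_cpow]
    rw [← Finset.sum_coe_sort]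
    have := hasSum_fintype (fun S : {S // S ∈ (primesOf J.1).powerset} =>
      (Nat.card (𝓞 K ⧸ J.1) : ℂ) ^ (-s) * ∏ P ∈ S.1,
       ((((Nat.card (𝓞 K ⧸ P.1) : ℂ) - 1) ^ (-s) - (Nat.card (𝓞 K ⧸ P.1) : ℂ) ^ (-s)) /
        (Nat.card (𝓞 K ⧸ P.1) : ℂ) ^ (-s)))
    rw [← (fiberEquiv J).hasSum_iff] at this
    convert this using 2 with x
    obtain ⟨⟨I, S⟩, rfl⟩ := x
    change (Nat.card (𝓞 K ⧸ I.1) : ℂ) ^ (-s) * ∏ P ∈ S, h P =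
      (Nat.card (𝓞 K ⧸ (I.1 * ∏ P ∈ S, P.1)) : ℂ) ^ (-s) * ∏ P ∈ S,
       (h P / (Nat.card (𝓞 K ⧸ P.1) : ℂ) ^ (-s))
    have hmul : Nat.card (𝓞 K ⧸ (I.1 * ∏ P ∈ S, P.1)) =
        Nat.card (𝓞 K ⧸ I.1) * ∏ P ∈ S, Nat.card (𝓞 K ⧸ P.1) := by
      change Ideal.absNorm _ = Ideal.absNorm _ * ∏ P ∈ S, Ideal.absNorm P.1
      rw [map_mul, map_prod]
    rw [hmul, Nat.cast_mul, Complex.natCast_mul_natCast_cpow, natCast_prod_cpow, mul_assoc,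
      ← Finset.prod_mul_distrib]
    congr 1
    refine Finset.prod_congr rfl fun P _ => ?_
    have h2 := two_le_card P
    rw [mul_div_cancel₀]
    rw [Complex.cpow_ne_zero_iff]
    left
    exact_mod_cast (by lia : Nat.card (𝓞 K ⧸ P.1) ≠ 0)
  refine ⟨hmain.summable, hN.of_norm, ?_, ?_⟩
  · rw [heq]
    exact multipliable_one_add_of_summable_prod hprodn.of_norm
  · rw [hmain.tsum_eq, heq, tprod_one_add hprodn.of_norm]
end

section
/- Let K be a number field with ring of integers O_K, and for a nonzero ideal I of O_K let N(I) = #(O_K/I). Then ∏_P (1 + (N(P)−1)^{−1} − N(P)^{−1}) · ∑_I N(I)^{−6} = (∑_I N(I)^{−2}) · (∑_I N(I)^{−3}), where the product runs over all nonzero prime ideals P of O_K and each sum runs over all nonzero ideals I of O_K (all quantities being convergent positive real numbers); that is, f_K(1) = ζ_K(2)ζ_K(3)/ζ_K(6). -/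
open NumberField
theorem euler_aux {R : Type*} [CommRing R] [IsDedekindDomain R] (f : Ideal R →*₀ ℝ)
    (hf : ∀ I, 0 ≤ f I) (hs : Summable f) :
    HasProd (fun P : {P : Ideal R // P.IsPrime ∧ P ≠ ⊥} => 1 - f P.1) (∑' I, f I)⁻¹ := by
  classical
  have h1 : 1 ≤ ∑' I, f I := by
    have := hs.le_tsum 1 (fun j _ => hf j)
    rwa [map_one] at this
  have key : ∀ S : Finset {P : Ideal R // P.IsPrime ∧ P ≠ ⊥},
      ∑' I, (if ∀ P ∈ S, ¬ P.1 ∣ I then f I else 0) = (∏ P ∈ S, (1 - f P.1)) * ∑' I, f I := by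
    intro S
    induction S using Finset.induction with
    | empty => simp
    | insert P S hP ih =>
      rw [Finset.prod_insert hP, mul_assoc, ← ih, sub_mul, one_mul, ← tsum_mul_left]
      have hsum : ∀ S : Finset {P : Ideal R // P.IsPrime ∧ P ≠ ⊥},
          Summable (fun I => (if ∀ P ∈ S, ¬ P.1 ∣ I then f I else 0)) := by
        intro S
        refine hs.of_nonneg_of_le (fun I => ?_) (fun I => ?_) <;> split_ifs <;> simp [hf]
      have hinj : Function.Injective (fun I : Ideal R => P.1 * I) :=
        mul_right_injective₀ P.2.2
      have e : ∑' I, f P.1 * (if ∀ P ∈ S, ¬ P.1 ∣ I then f I else 0) =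
          ∑' I, (if P.1 ∣ I then (if ∀ P ∈ S, ¬ P.1 ∣ I then f I else 0) else 0) := by
        symm
        rw [← hinj.tsum_eq]
        · refine tsum_congr fun I => ?_
          have : (∀ Q ∈ S, ¬ Q.1 ∣ P.1 * I) ↔ ∀ Q ∈ S, ¬ Q.1 ∣ I := by
            refine forall₂_congr fun Q hQ => not_congr ⟨fun h => ?_, fun h => h.mul_left _⟩
            have hQp : Prime Q.1 := Ideal.prime_of_isPrime Q.2.2 Q.2.1
            have hPp : Prime P.1 := Ideal.prime_of_isPrime P.2.2 P.2.1
            rcases hQp.dvd_or_dvd h with h | h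
            · exfalso
              have := associated_iff_eq.mp ((hQp.dvd_prime_iff_associated hPp).mp h)
              exact hP ((Subtype.ext this : Q = P) ▸ hQ)
            · exact h
          simp only [this, dvd_mul_right, if_true, map_mul, mul_ite, mul_zero]
        · intro I hI
          by_contra h
          apply hI
          change (if P.1 ∣ I then _ else _) = _
          rw [if_neg]
          rintro ⟨J, rfl⟩
          exact h ⟨J, rfl⟩
      rw [e, ← Summable.tsum_sub (hsum S)]
      · refine tsum_congr fun I => ?_
        simp only [Finset.forall_mem_insert]
        by_cases h : P.1 ∣ I <;> simp [h]
      · refine hs.of_nonneg_of_le (fun I => ?_) (fun I => ?_) <;> split_ifs <;> simp [hf]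
  have lim : Filter.Tendsto (fun S : Finset {P : Ideal R // P.IsPrime ∧ P ≠ ⊥} =>
      ∑' I, (if ∀ P ∈ S, ¬ P.1 ∣ I then f I else 0)) Filter.atTop
      (nhds (∑' I, if I = 1 then f I else 0)) := by
    refine tendsto_tsum_of_dominated_convergence hs (fun I => ?_) (Filter.Eventually.of_forall fun S I => ?_)
    · by_cases hI : I = 1
      · subst hI
        refine tendsto_const_nhds.congr fun S => ?_
        rw [if_pos rfl, if_pos]
        intro P _ h
        exact P.2.1.ne_top (by simpa [Ideal.isUnit_iff] using isUnit_of_dvd_one h)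
      · rw [if_neg hI]
        by_cases h0 : I = ⊥
        · subst h0
          have : f ⊥ = 0 := map_zero f
          simp [this]
        · obtain ⟨M, hM, hIM⟩ := Ideal.exists_le_maximal I (by simpa using hI)
          have hM0 : M ≠ ⊥ := fun h => h0 (le_bot_iff.mp (h ▸ hIM))
          refine tendsto_const_nhds.congr' ?_
          filter_upwards [Filter.eventually_ge_atTop {⟨M, hM.isPrime, hM0⟩}] with S hS
          rw [if_neg]
          intro h
          exact h ⟨M, hM.isPrime, hM0⟩ (hS (by simp)) (Ideal.dvd_iff_le.mpr hIM)
    · split_ifs <;> simp [abs_of_nonneg, hf]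
  simp only [key, tsum_ite_eq, map_one] at lim
  have := lim.mul_const (∑' I, f I)⁻¹
  simpa [HasProd, mul_assoc, mul_inv_cancel₀ (by linarith : (∑' I, f I) ≠ 0)] using this

theorem summable_norm_aux (K : Type*) [Field K] [NumberField K] :
    Summable (fun I : Ideal (𝓞 K) => ((Ideal.absNorm I : ℝ) ^ 2)⁻¹) := by
  obtain ⟨c, hlim⟩ : ∃ c, Filter.Tendsto ((fun s : ℝ ↦
      (Nat.card {I : nonZeroDivisors (Ideal (𝓞 K)) //
        Ideal.absNorm (I : Ideal (𝓞 K)) ≤ s} : ℝ) / s) ∘ (Nat.cast : ℕ → ℝ))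
        Filter.atTop (nhds c) :=
    ⟨_, (Ideal.tendsto_norm_le_div_atTop₀ K).comp tendsto_natCast_atTop_atTop⟩
  have hlim2 : Filter.Tendsto (fun n : ℕ => (∑ k ∈ Finset.Icc 1 n,
      (Nat.card {I : Ideal (𝓞 K) // Ideal.absNorm I = k} : ℝ)) / (n : ℝ)) Filter.atTop (nhds c) := by
    refine hlim.congr fun n ↦ ?_
    simp only [Function.comp_apply, Nat.cast_le, ← Nat.cast_sum]
    congr
    rw [← add_left_inj 1, ← Ideal.card_norm_le_eq_card_norm_le_add_one,
      show Finset.Icc 1 n = Finset.Ioc 0 n from Finset.Icc_succ_left_eq_Ioc _ _,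
      show 1 = Nat.card {I : Ideal (𝓞 K) // Ideal.absNorm I = 0} by
        simp [Ideal.absNorm_eq_zero_iff],
      Finset.sum_Ioc_add_eq_sum_Icc (n.zero_le),
      ← Finset.card_preimage_eq_sum_card_image_eq
        (fun k _ ↦ Ideal.finite_setOfPred_absNorm_eq k)]
    simp [Set.coe_eq_subtype]
  have hO : (fun n : ℕ => ∑ k ∈ Finset.Icc 1 n,
      (Nat.card {I : Ideal (𝓞 K) // Ideal.absNorm I = k} : ℝ)) =O[Filter.atTop]
      fun n : ℕ => (n : ℝ) ^ (1 : ℝ) := by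
    have := hlim2.isBigO_one ℝ
    have h2 := this.mul (Asymptotics.isBigO_refl (fun n : ℕ => (n : ℝ)) Filter.atTop)
    refine h2.congr' ?_ ?_
    · filter_upwards [Filter.eventually_gt_atTop 0] with n hn
      have : (n : ℝ) ≠ 0 := by positivity
      field_simp
    · filter_upwards with n
      simp
  have hL := LSeriesSummable_of_sum_norm_bigO_and_nonneg (s := 2) hO
    (fun _ => Nat.cast_nonneg _) zero_le_one (by norm_num)
  have hL' := hL.norm
  rw [← (Equiv.sigmaFiberEquiv (fun I : Ideal (𝓞 K) => Ideal.absNorm I)).summable_iff,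
    summable_sigma_of_nonneg (fun _ => by dsimp; positivity)]
  have hfin : ∀ n, Finite {I : Ideal (𝓞 K) // Ideal.absNorm I = n} := fun n =>
    (Ideal.finite_setOfPred_absNorm_eq (S := 𝓞 K) n).to_subtype
  refine ⟨fun n => Summable.of_finite, hL'.congr fun n => ?_⟩
  have : Fintype {I : Ideal (𝓞 K) // Ideal.absNorm I = n} := Fintype.ofFinite _
  have h2 : ∀ I : {I : Ideal (𝓞 K) // Ideal.absNorm I = n},
    ((fun I : Ideal (𝓞 K) => ((Ideal.absNorm I : ℝ) ^ 2)⁻¹) ∘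
      (Equiv.sigmaFiberEquiv (fun I : Ideal (𝓞 K) => Ideal.absNorm I))) ⟨n, I⟩ = ((n : ℝ) ^ 2)⁻¹ := by
    intro I
    simp [I.2]
  rw [tsum_congr h2, tsum_fintype]
  rcases eq_or_ne n 0 with rfl | hn
  · simp
  · simp [LSeries.term_of_ne_zero hn, Nat.card_eq_fintype_card, div_eq_mul_inv]

/-- `I ↦ N(I)^{-k}` as a monoid-with-zero homomorphism. -/
noncomputable def normInvPow (K : Type*) [Field K] [NumberField K] (k : ℕ) (hk : k ≠ 0) :
    Ideal (𝓞 K) →*₀ ℝ where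
  toFun I := ((Ideal.absNorm I : ℝ) ^ k)⁻¹
  map_zero' := by simp [hk]
  map_one' := by simp
  map_mul' I J := by simp [mul_pow, mul_comm]

theorem HasProd_inv_aux {ι : Type*} {f : ι → ℝ} {a : ℝ} (h : HasProd f a) (ha : a ≠ 0) :
    HasProd (fun i => (f i)⁻¹) a⁻¹ := by
  have := Filter.Tendsto.inv₀ h ha
  simpa [HasProd] using this

theorem local_factor (x : ℝ) (hx : 1 < x) :
    1 + (x - 1)⁻¹ - x⁻¹ = (1 - (x ^ 6)⁻¹) * ((1 - (x ^ 2)⁻¹) * (1 - (x ^ 3)⁻¹))⁻¹ := by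
  have h0 : x ≠ 0 := by positivity
  have h1 : x - 1 ≠ 0 := by linarith
  have h2 : x ^ 2 - 1 ≠ 0 := by nlinarith
  have h3 : x ^ 3 - 1 ≠ 0 := by
    have : 1 < x ^ 3 := one_lt_pow₀ hx (by norm_num)
    linarith
  field_simp
  ring

theorem summable_norm_aux2 (K : Type*) [Field K] [NumberField K] (k : ℕ) (hk : 2 ≤ k) :
    Summable (fun I : Ideal (𝓞 K) => ((Ideal.absNorm I : ℝ) ^ k)⁻¹) := by
  refine (summable_norm_aux K).of_nonneg_of_le (fun I => by positivity) (fun I => ?_)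
  rcases Nat.eq_zero_or_pos (Ideal.absNorm I) with h | h
  · rw [h]; simp [show k ≠ 0 by omega]
  · have : (1 : ℝ) ≤ Ideal.absNorm I := by exact_mod_cast h
    gcongr

theorem euler_norm (K : Type*) [Field K] [NumberField K] (k : ℕ) (hk : 2 ≤ k) :
    Summable (fun I : {I : Ideal (𝓞 K) // I ≠ ⊥} => ((Ideal.absNorm I.1 : ℝ) ^ k)⁻¹) ∧
    0 < (∑' I : {I : Ideal (𝓞 K) // I ≠ ⊥}, ((Ideal.absNorm I.1 : ℝ) ^ k)⁻¹) ∧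
    HasProd (fun P : {P : Ideal (𝓞 K) // P.IsPrime ∧ P ≠ ⊥} =>
      1 - ((Ideal.absNorm P.1 : ℝ) ^ k)⁻¹)
      (∑' I : {I : Ideal (𝓞 K) // I ≠ ⊥}, ((Ideal.absNorm I.1 : ℝ) ^ k)⁻¹)⁻¹ := by
  have hs := summable_norm_aux2 K k hk
  have h := euler_aux (normInvPow K k (by omega))
    (fun I => by change 0 ≤ ((Ideal.absNorm I : ℝ) ^ k)⁻¹; positivity) hs
  have hs' : Summable (fun I : {I : Ideal (𝓞 K) // I ≠ ⊥} => ((Ideal.absNorm I.1 : ℝ) ^ k)⁻¹) :=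
    hs.comp_injective Subtype.val_injective
  have e : (∑' I : {I : Ideal (𝓞 K) // I ≠ ⊥}, ((Ideal.absNorm I.1 : ℝ) ^ k)⁻¹) =
      ∑' I : Ideal (𝓞 K), ((Ideal.absNorm I : ℝ) ^ k)⁻¹ := by
    refine tsum_subtype_eq_of_support_subset (s := {I : Ideal (𝓞 K) | I ≠ ⊥})
      (f := fun I : Ideal (𝓞 K) => ((Ideal.absNorm I : ℝ) ^ k)⁻¹) ?_
    rintro I hI rfl
    apply hI
    simp [show k ≠ 0 by omega]
  refine ⟨hs', ?_, ?_⟩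
  · refine hs'.tsum_pos (fun I => by positivity) ⟨1, one_ne_zero⟩ ?_
    simp
  · rw [e]; exact h


/-- For a number field `K` with norm `N(I) = #(𝓞 K / I)`, one has
`f_K(1) · ζ_K(6) = ζ_K(2) · ζ_K(3)`, i.e. `f_K(1) = ζ_K(2)ζ_K(3)/ζ_K(6)`, where
`f_K(1) = ∏_P (1 + (N(P)−1)^{−1} − N(P)^{−1})` over the nonzero prime ideals of `𝓞 K`,
and `ζ_K(σ) = ∑_I N(I)^{−σ}` over the nonzero ideals of `𝓞 K`; all the quantities are
convergent positive reals. -/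
theorem numberField_euler_product_at_one
    (K : Type*) [Field K] [NumberField K] :
    Multipliable (fun P : {P : Ideal (𝓞 K) // P.IsPrime ∧ P ≠ ⊥} =>
      (1 + ((Nat.card (𝓞 K ⧸ P.1) : ℝ) - 1)⁻¹ - (Nat.card (𝓞 K ⧸ P.1) : ℝ)⁻¹)) ∧
    Summable (fun I : {I : Ideal (𝓞 K) // I ≠ ⊥} => ((Nat.card (𝓞 K ⧸ I.1) : ℝ) ^ 2)⁻¹) ∧
    Summable (fun I : {I : Ideal (𝓞 K) // I ≠ ⊥} => ((Nat.card (𝓞 K ⧸ I.1) : ℝ) ^ 3)⁻¹) ∧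
    Summable (fun I : {I : Ideal (𝓞 K) // I ≠ ⊥} => ((Nat.card (𝓞 K ⧸ I.1) : ℝ) ^ 6)⁻¹) ∧
    (∏' P : {P : Ideal (𝓞 K) // P.IsPrime ∧ P ≠ ⊥},
        (1 + ((Nat.card (𝓞 K ⧸ P.1) : ℝ) - 1)⁻¹ - (Nat.card (𝓞 K ⧸ P.1) : ℝ)⁻¹)) *
      (∑' I : {I : Ideal (𝓞 K) // I ≠ ⊥}, ((Nat.card (𝓞 K ⧸ I.1) : ℝ) ^ 6)⁻¹) =
      (∑' I : {I : Ideal (𝓞 K) // I ≠ ⊥}, ((Nat.card (𝓞 K ⧸ I.1) : ℝ) ^ 2)⁻¹) *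
      (∑' I : {I : Ideal (𝓞 K) // I ≠ ⊥}, ((Nat.card (𝓞 K ⧸ I.1) : ℝ) ^ 3)⁻¹) := by
  obtain ⟨s2, p2, h2⟩ := euler_norm K 2 le_rfl
  obtain ⟨s3, p3, h3⟩ := euler_norm K 3 (by norm_num)
  obtain ⟨s6, p6, h6⟩ := euler_norm K 6 (by norm_num)
  have hN : ∀ I : Ideal (𝓞 K), Nat.card (𝓞 K ⧸ I) = Ideal.absNorm I := fun I => rfl
  simp only [hN]
  have hp := h6.mul (HasProd_inv_aux (h2.mul h3) (by positivity))
  have hfun : (fun P : {P : Ideal (𝓞 K) // P.IsPrime ∧ P ≠ ⊥} =>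
      (1 + ((Ideal.absNorm P.1 : ℝ) - 1)⁻¹ - (Ideal.absNorm P.1 : ℝ)⁻¹)) =
      fun P => (1 - ((Ideal.absNorm P.1 : ℝ) ^ 6)⁻¹) *
        ((1 - ((Ideal.absNorm P.1 : ℝ) ^ 2)⁻¹) * (1 - ((Ideal.absNorm P.1 : ℝ) ^ 3)⁻¹))⁻¹ := by
    funext P
    apply local_factor
    have h0 : Ideal.absNorm P.1 ≠ 0 := by
      simpa [Ideal.absNorm_eq_zero_iff] using P.2.2
    have h1 : Ideal.absNorm P.1 ≠ 1 := by
      simpa [Ideal.absNorm_eq_one_iff] using P.2.1.ne_top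
    exact_mod_cast (by omega : 1 < Ideal.absNorm P.1)
  have hp' := hp
  rw [← hfun] at hp'
  refine ⟨hp'.multipliable, s2, s3, s6, ?_⟩
  rw [hp'.tprod_eq]
  rw [mul_inv, inv_inv, inv_inv, mul_comm, mul_inv_cancel_left₀ p6.ne']
end

section
/- Let K be a number field with ring of integers O_K. For a nonzero ideal I let N(I) = #(O_K/I) and φ_K(I) = #(O_K/I)^×, and for a positive integer n let t_K(n) be the (finite) number of nonzero ideals I with φ_K(I) = n. For real σ > 1 write ζ_K(σ) = ∑_I N(I)^{−σ} (sum over nonzero ideals). Suppose ρ is a real number such that (σ−1)·ζ_K(σ) tends to ρ as σ tends to 1 from the right. Then the averages (1/N)·∑_{n=1}^{N} t_K(n) converge as N → ∞ to ρ · ζ_K(2) · ζ_K(3) / ζ_K(6). -/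
open NumberField

/-- The number of nonzero ideals `I` of the ring of integers of `K` with
`#(𝓞 K / I)ˣ = n` (the totient multiplicity function of the number field `K`). -/
noncomputable def totientMultiplicity (K : Type*) [Field K] [NumberField K] (n : ℕ) : ℕ :=
  Nat.card {I : Ideal (𝓞 K) // I ≠ ⊥ ∧ Nat.card ((𝓞 K ⧸ I)ˣ) = n}

namespace TotMean

open IsDedekindDomain

variable {K : Type*} [Field K] [NumberField K]

/-- norm of a prime, as a real -/
noncomputable def qq (p : HeightOneSpectrum (𝓞 K)) : ℝ := (Ideal.absNorm p.asIdeal : ℝ)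

lemma two_le_qq (p : HeightOneSpectrum (𝓞 K)) : 2 ≤ qq p := by
  have h0 : Ideal.absNorm p.asIdeal ≠ 0 := by
    rw [Ne, Ideal.absNorm_eq_zero_iff]; exact p.ne_bot
  have h1 : Ideal.absNorm p.asIdeal ≠ 1 := by
    rw [Ne, Ideal.absNorm_eq_one_iff]; exact p.isPrime.ne_top
  unfold qq
  exact_mod_cast (by omega : 2 ≤ Ideal.absNorm p.asIdeal)

/-- local factor -/
noncomputable def mm (p : HeightOneSpectrum (𝓞 K)) : ℝ := 1 - 1 / qq p

lemma card_quot (I : Ideal (𝓞 K)) : Nat.card (𝓞 K ⧸ I) = Ideal.absNorm I := by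
  rw [Ideal.absNorm_apply, Submodule.cardQuot_apply]

lemma finite_quot {I : Ideal (𝓞 K)} (h : I ≠ ⊥) : Finite (𝓞 K ⧸ I) := by
  rw [← Ideal.absNorm_ne_zero_iff, Ne, Ideal.absNorm_eq_zero_iff]; exact h

lemma totient_pow (p : HeightOneSpectrum (𝓞 K)) {n : ℕ} (hn : n ≠ 0) :
    (Nat.card ((𝓞 K ⧸ p.asIdeal ^ n)ˣ) : ℝ) = (Ideal.absNorm (p.asIdeal ^ n) : ℝ) * mm p := by
  classical
  have hmax : p.asIdeal.IsMaximal := p.isMaximal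
  have hpn : p.asIdeal ^ n ≠ ⊥ := pow_ne_zero n p.ne_bot
  have := finite_quot hpn
  have := finite_quot p.ne_bot
  let f : (𝓞 K ⧸ p.asIdeal ^ n) →+* (𝓞 K ⧸ p.asIdeal) :=
    Ideal.Quotient.factor (Ideal.pow_le_self hn)
  have hf : Function.Surjective f := Ideal.Quotient.factor_surjective _
  have hunit : ∀ x, IsUnit x ↔ f x ≠ 0 := by
    intro x
    obtain ⟨y, rfl⟩ := Ideal.Quotient.mk_surjective x
    rw [Ideal.Quotient.isUnit_mk_pow_iff_notMem _ hn]
    simp [f, Ideal.Quotient.eq_zero_iff_mem]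
  have h1 : Nat.card f.toAddMonoidHom.ker * Nat.card (𝓞 K ⧸ p.asIdeal) =
      Nat.card (𝓞 K ⧸ p.asIdeal ^ n) := by
    rw [← AddSubgroup.card_mul_index f.toAddMonoidHom.ker, AddSubgroup.index_ker]
    have : f.toAddMonoidHom.range = ⊤ := AddMonoidHom.range_eq_top.mpr hf
    rw [this]
    simp
  have h2 : Nat.card ((𝓞 K ⧸ p.asIdeal ^ n)ˣ) + Nat.card f.toAddMonoidHom.ker =
      Nat.card (𝓞 K ⧸ p.asIdeal ^ n) := by
    rw [Nat.card_congr (Equiv.sumCompl (fun x : 𝓞 K ⧸ p.asIdeal ^ n => IsUnit x)).symm,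
      Nat.card_sum]
    congr 1
    · exact Nat.card_congr ⟨fun u => ⟨u.1, u.isUnit⟩, fun x => x.2.unit, fun u => by ext; rfl, fun x => rfl⟩
    · refine Nat.card_congr (Equiv.subtypeEquivRight fun x => ?_)
      rw [hunit]
      simp [AddMonoidHom.mem_ker]
  rw [card_quot, card_quot] at h1
  rw [card_quot] at h2
  have hq := two_le_qq p
  have h1' : (Nat.card f.toAddMonoidHom.ker : ℝ) * qq p = Ideal.absNorm (p.asIdeal ^ n) := by
    unfold qq; exact_mod_cast h1
  have h2' : (Nat.card ((𝓞 K ⧸ p.asIdeal ^ n)ˣ) : ℝ) + Nat.card f.toAddMonoidHom.ker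
     = Ideal.absNorm (p.asIdeal ^ n) := by exact_mod_cast h2
  have h3 : (Nat.card f.toAddMonoidHom.ker : ℝ) = Ideal.absNorm (p.asIdeal ^ n) / qq p := by
    rw [← h1']; field_simp
  unfold mm
  rw [eq_sub_of_add_eq h2', h3]
  ring

/-- primes dividing `I` -/
noncomputable def PP (I : Ideal (𝓞 K)) (hI : I ≠ ⊥) : Finset (HeightOneSpectrum (𝓞 K)) :=
  (Ideal.finite_factors hI).toFinset

lemma mem_PP {I : Ideal (𝓞 K)} (hI : I ≠ ⊥) (p : HeightOneSpectrum (𝓞 K)) :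
    p ∈ PP I hI ↔ p.asIdeal ∣ I := by simp [PP]

lemma prime_dvd_mul (p : HeightOneSpectrum (𝓞 K)) (I J : Ideal (𝓞 K)) :
    p.asIdeal ∣ I * J ↔ p.asIdeal ∣ I ∨ p.asIdeal ∣ J := p.prime.dvd_mul

lemma totient_formula (I : Ideal (𝓞 K)) : ∀ hI : I ≠ ⊥,
    (Nat.card ((𝓞 K ⧸ I)ˣ) : ℝ) = (Ideal.absNorm I : ℝ) * ∏ p ∈ PP I hI, mm p := by
  classical
  have hunit : ∀ {I : Ideal (𝓞 K)}, IsUnit I → ∀ hI : I ≠ ⊥,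
    (Nat.card ((𝓞 K ⧸ I)ˣ) : ℝ) = (Ideal.absNorm I : ℝ) * ∏ p ∈ PP I hI, mm p := by
    intro I hI hI0
    have hI' := Ideal.isUnit_iff.mp hI
    have hP : PP I hI0 = ∅ := by
      ext p
      simp only [mem_PP, Finset.notMem_empty, iff_false]
      intro h
      exact p.prime.not_isUnit (isUnit_of_dvd_unit h hI)
    have : Subsingleton (𝓞 K ⧸ I) := Ideal.Quotient.subsingleton_iff.mpr hI'
    rw [hP, hI']
    have : Subsingleton (𝓞 K ⧸ (⊤ : Ideal (𝓞 K))) := Ideal.Quotient.subsingleton_iff.mpr rfl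
    simp
  induction I using UniqueFactorizationMonoid.induction_on_coprime with
  | h0 => intro h; exact absurd rfl h
  | h1 h => exact hunit h
  | @hpr P i hP =>
    rcases eq_or_ne i 0 with rfl | hi
    · exact hunit (by simp)
    · intro hI
      let p : HeightOneSpectrum (𝓞 K) := ⟨P, Ideal.isPrime_of_prime hP, hP.ne_zero⟩
      have hPP : PP (P ^ i) hI = {p} := by
        ext v
        rw [mem_PP, Finset.mem_singleton]
        constructor
        · intro h
          have h2 := v.prime.dvd_of_dvd_pow h
          have := (v.prime.associated_of_dvd hP h2)
          exact HeightOneSpectrum.ext (associated_iff_eq.mp this)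
        · rintro rfl
          exact dvd_pow_self _ hi
      rw [hPP, Finset.prod_singleton]
      exact totient_pow p hi
  | @hcp I J hIJ hI hJ =>
    intro h
    have hI0 : I ≠ ⊥ := left_ne_zero_of_mul h
    have hJ0 : J ≠ ⊥ := right_ne_zero_of_mul h
    have hco : IsCoprime I J := by
      rw [Ideal.isCoprime_iff_gcd]
      have := hIJ (gcd_dvd_left I J) (gcd_dvd_right I J)
      rw [Ideal.one_eq_top]; exact Ideal.isUnit_iff.mp this
    have hPP : PP (I * J) h = PP I hI0 ∪ PP J hJ0 := by
      ext p; simp [mem_PP, prime_dvd_mul]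
    have hdis : Disjoint (PP I hI0) (PP J hJ0) := by
      rw [Finset.disjoint_left]
      intro p h1 h2
      rw [mem_PP] at h1 h2
      exact p.prime.not_isUnit (hIJ h1 h2)
    rw [hPP, Finset.prod_union hdis, map_mul, Nat.cast_mul,
      Nat.card_congr ((Units.mapEquiv (Ideal.quotientMulEquivQuotientProd I J hco).toMulEquiv).trans
        MulEquiv.prodUnits).toEquiv, Nat.card_prod, Nat.cast_mul, hI hI0, hJ hJ0]
    ring

end TotMean
namespace TotMean

open IsDedekindDomain Filter Topology

/-- nonzero ideals -/
abbrev XX (K : Type*) [Field K] [NumberField K] : Type _ := {I : Ideal (𝓞 K) // I ≠ ⊥}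

section zeta
variable (K : Type*) [Field K] [NumberField K]

/-- norm of a nonzero ideal as a natural number -/
noncomputable def nn (I : XX K) : ℕ := Ideal.absNorm I.1

lemma nn_pos (I : XX K) : 0 < nn K I := by
  rw [Nat.pos_iff_ne_zero]
  unfold nn
  rw [Ne, Ideal.absNorm_eq_zero_iff]; exact I.2

lemma finite_nn_le (n : ℕ) : {I : XX K | nn K I ≤ n}.Finite := by
  have := (Ideal.finite_setOfPred_absNorm_le (S := 𝓞 K) n)
  exact this.preimage (f := fun I : XX K => I.1) Subtype.val_injective.injOn

lemma finite_nn_le_real (x : ℝ) : {I : XX K | (nn K I : ℝ) ≤ x}.Finite := by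
  refine (finite_nn_le K ⌊x⌋₊).subset fun I hI => ?_
  exact Nat.le_floor hI

lemma A_tendsto : Tendsto (fun x : ℝ => ({I : XX K | (nn K I : ℝ) ≤ x}.ncard : ℝ) / x) atTop
    (𝓝 (dedekindZeta_residue K)) := by
  refine (NumberField.Ideal.tendsto_norm_le_div_atTop₀ K).congr fun x => ?_
  congr 2
  rw [← Nat.card_coe_set_eq]
  let e : nonZeroDivisors (Ideal (𝓞 K)) ≃ XX K :=
    Equiv.subtypeEquivRight fun I => by rw [mem_nonZeroDivisors_iff_ne_zero]; rfl
  exact Nat.card_congr (e.subtypeEquiv fun I => Iff.rfl)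

/-- coefficients -/
noncomputable def aa (n : ℕ) : ℝ := (Nat.card {I : Ideal (𝓞 K) // Ideal.absNorm I = n} : ℝ)

lemma aa_sum_tendsto : Tendsto (fun n : ℕ => (∑ k ∈ Finset.Icc 1 n, aa K k) / (n : ℝ)) atTop
    (𝓝 (dedekindZeta_residue K)) := by
  refine ((Ideal.tendsto_norm_le_div_atTop₀ K).comp tendsto_natCast_atTop_atTop).congr fun n ↦ ?_
  simp only [Function.comp_apply, Nat.cast_le, aa, ← Nat.cast_sum]
  congr
  rw [← add_left_inj 1, ← Ideal.card_norm_le_eq_card_norm_le_add_one,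
    show Finset.Icc 1 n = Finset.Ioc 0 n from Finset.Icc_succ_left_eq_Ioc _ _,
    show 1 = Nat.card {I : Ideal (𝓞 K) // Ideal.absNorm I = 0} by simp [Ideal.absNorm_eq_zero_iff],
    Finset.sum_Ioc_add_eq_sum_Icc (n.zero_le),
    ← Finset.card_preimage_eq_sum_card_image_eq (fun k _ ↦ Ideal.finite_setOfPred_absNorm_eq k)]
  simp [Set.coe_eq_subtype]

lemma aa_LSeriesSummable {s : ℝ} (hs : 1 < s) : LSeriesSummable (fun n => (aa K n : ℂ)) s := by
  refine LSeriesSummable_of_sum_norm_bigO_and_nonneg (r := 1) ?_ (fun n => by unfold aa; positivity)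
    zero_le_one (by simpa using hs)
  have h := (aa_sum_tendsto K).isBigO_one ℝ
  have h2 := h.mul (Asymptotics.isBigO_refl (fun n : ℕ => (n : ℝ)) atTop)
  refine (h2.congr' ?_ ?_)
  · filter_upwards [eventually_gt_atTop 0] with n hn
    field_simp
  · exact Eventually.of_forall fun n => by simp

lemma term_eq {s : ℝ} (hs : 1 < s) (n : ℕ) :
    LSeries.term (fun n => (aa K n : ℂ)) s n = ((aa K n * (n : ℝ) ^ (-s) : ℝ) : ℂ) := by
  rcases eq_or_ne n 0 with rfl | hn
  · simp [Real.zero_rpow (by linarith : -s ≠ 0)]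
  · rw [LSeries.term_of_ne_zero hn, Complex.ofReal_mul, div_eq_mul_inv, ← Complex.cpow_neg,
      Complex.ofReal_cpow (by positivity)]
    simp

lemma fiber_card {n : ℕ} (hn : n ≠ 0) : (Nat.card {I : XX K // nn K I = n} : ℝ) = aa K n := by
  unfold aa
  congr 1
  refine Nat.card_congr ⟨fun I => ⟨I.1.1, I.2⟩, fun I => ⟨⟨I.1, ?_⟩, I.2⟩, fun _ => rfl, fun _ => rfl⟩
  intro h
  have := I.2
  rw [h, Ideal.absNorm_bot] at this
  exact hn this.symm

lemma zeta_hasSum {s : ℝ} (hs : 1 < s) :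
    Summable (fun I : XX K => (nn K I : ℝ) ^ (-s)) ∧
      ((∑' I : XX K, (nn K I : ℝ) ^ (-s) : ℝ) : ℂ) = dedekindZeta K s := by
  have hsum : Summable (fun n : ℕ => aa K n * (n : ℝ) ^ (-s)) := by
    have := aa_LSeriesSummable K hs
    unfold LSeriesSummable at this
    simp_rw [funext (term_eq K hs)] at this
    exact_mod_cast this
  have hfin : ∀ n, Finite {I : XX K // nn K I = n} := fun n =>
    ((finite_nn_le K n).subset (fun I hI => le_of_eq hI) : {I : XX K | nn K I = n}.Finite)
  let e := Equiv.sigmaFiberEquiv (fun I : XX K => nn K I)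
  have hfib : ∀ n : ℕ, (∑' I : {I : XX K // nn K I = n}, (nn K (e ⟨n, I⟩) : ℝ) ^ (-s)) =
      aa K n * (n : ℝ) ^ (-s) := by
    intro n
    have h1 : ∀ I : {I : XX K // nn K I = n}, (nn K (e ⟨n, I⟩) : ℝ) ^ (-s) = (n : ℝ) ^ (-s) := by
      intro I
      rw [show nn K (e ⟨n, I⟩) = n from I.2]
    have := Fintype.ofFinite {I : XX K // nn K I = n}
    rw [tsum_congr h1, tsum_fintype, Finset.sum_const, nsmul_eq_mul]
    rcases eq_or_ne n 0 with rfl | hn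
    · simp [Real.zero_rpow (by linarith : -s ≠ 0)]
    · rw [← fiber_card K hn, Nat.card_eq_fintype_card, Finset.card_univ]
  have hsig : Summable (fun a => (nn K (e a) : ℝ) ^ (-s)) := by
    rw [summable_sigma_of_nonneg (fun a => by positivity)]
    refine ⟨fun n => Summable.of_finite, ?_⟩
    refine hsum.congr fun n => (hfib n).symm
  refine ⟨e.summable_iff.mp hsig, ?_⟩
  rw [← e.tsum_eq, hsig.tsum_sigma, tsum_congr hfib, dedekindZeta, LSeries, Complex.ofReal_tsum]
  refine tsum_congr fun n => ?_
  rw [← term_eq K hs]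
  simp [aa]

lemma residue_eq (ρ : ℝ) (hρ : Tendsto
      (fun σ : ℝ => (σ - 1) * ∑' I : XX K, (nn K I : ℝ) ^ (-σ)) (𝓝[>] 1) (𝓝 ρ)) :
    ρ = dedekindZeta_residue K := by
  have h1 := tendsto_sub_one_mul_dedekindZeta_nhdsGT K
  have h2 := (Complex.continuous_ofReal.tendsto ρ).comp hρ
  have := tendsto_nhds_unique (h2.congr' ?_) h1
  · exact_mod_cast this
  · filter_upwards [self_mem_nhdsWithin] with s hs
    simp only [Function.comp_apply, Complex.ofReal_mul]
    rw [(zeta_hasSum K hs).2]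
    simp

end zeta

end TotMean
namespace TotMean

open IsDedekindDomain Filter Topology

section euler
variable (K : Type*) [Field K] [NumberField K]

variable {K} in
/-- multiplication by a prime -/
noncomputable def mulP (p : HeightOneSpectrum (𝓞 K)) (I : XX K) : XX K :=
  ⟨p.asIdeal * I.1, mul_ne_zero p.ne_bot I.2⟩

variable {K} in
lemma mulP_injective (p : HeightOneSpectrum (𝓞 K)) : Function.Injective (mulP p) := by
  intro I J h
  have h' : p.asIdeal * I.1 = p.asIdeal * J.1 := congrArg Subtype.val h
  exact Subtype.ext (mul_left_cancel₀ (p.ne_bot : p.asIdeal ≠ 0) h')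

variable {K} in
lemma nn_mulP (p : HeightOneSpectrum (𝓞 K)) (I : XX K) :
    (nn K (mulP p I) : ℝ) = qq p * nn K I := by
  simp [nn, mulP, qq]

variable {K} in
lemma exists_mulP {p : HeightOneSpectrum (𝓞 K)} {I : XX K} (h : p.asIdeal ∣ I.1) :
    ∃ J, mulP p J = I := by
  obtain ⟨J, hJ⟩ := h
  refine ⟨⟨J, ?_⟩, Subtype.ext hJ.symm⟩
  rintro rfl
  exact I.2 (by rw [hJ]; simp)

variable {K} in
lemma dvd_prime {p v : HeightOneSpectrum (𝓞 K)} : v.asIdeal ∣ p.asIdeal ↔ v = p := by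
  constructor
  · intro h
    exact HeightOneSpectrum.ext (associated_iff_eq.mp (v.prime.associated_of_dvd p.prime h))
  · rintro rfl; exact dvd_rfl

variable {K} in
lemma dvd_mulP {p v : HeightOneSpectrum (𝓞 K)} {I : XX K} :
    v.asIdeal ∣ (mulP p I).1 ↔ v = p ∨ v.asIdeal ∣ I.1 := by
  rw [mulP, prime_dvd_mul, dvd_prime]

open Classical in
/-- partial zeta -/
noncomputable def ZZ (s : ℝ) (S : Finset (HeightOneSpectrum (𝓞 K))) : ℝ :=
  ∑' I : XX K, if ∀ p ∈ S, ¬ p.asIdeal ∣ I.1 then (nn K I : ℝ) ^ (-s) else 0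

open Classical in
lemma ZZ_insert {s : ℝ} (hs : 1 < s) (S : Finset (HeightOneSpectrum (𝓞 K)))
    (p : HeightOneSpectrum (𝓞 K)) (hp : p ∉ S) :
    ZZ K s (insert p S) = ZZ K s S * (1 - qq p ^ (-s)) := by
  have hsum := (zeta_hasSum K hs).1
  have hsub : ∀ (Q : XX K → Prop) [DecidablePred Q], Summable (fun I : XX K => if Q I then (nn K I : ℝ) ^ (-s) else 0) :=
    fun Q _ => Summable.of_nonneg_of_le (fun I => by split_ifs <;> positivity)
      (fun I => by split_ifs; exacts [le_rfl, by positivity]) hsum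
  have h1 : ZZ K s S = ZZ K s (insert p S) +
      ∑' I : XX K, if (p.asIdeal ∣ I.1 ∧ ∀ v ∈ S, ¬ v.asIdeal ∣ I.1) then (nn K I : ℝ) ^ (-s) else 0 := by
    unfold ZZ
    refine Eq.trans ?_ (Summable.tsum_add (hsub _) (hsub _))
    refine tsum_congr fun I => ?_
    by_cases h : p.asIdeal ∣ I.1 <;> by_cases h' : ∀ v ∈ S, ¬ v.asIdeal ∣ I.1 <;> simp [h, h']
  have h2 : (∑' I : XX K, if (p.asIdeal ∣ I.1 ∧ ∀ v ∈ S, ¬ v.asIdeal ∣ I.1) then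
      (nn K I : ℝ) ^ (-s) else 0) = qq p ^ (-s) * ZZ K s S := by
    rw [← (mulP_injective p).tsum_eq]
    · unfold ZZ
      rw [← tsum_mul_left]
      refine tsum_congr fun I => ?_
      have e1 : (p.asIdeal ∣ (mulP p I).1 ∧ ∀ v ∈ S, ¬ v.asIdeal ∣ (mulP p I).1) ↔
          ∀ v ∈ S, ¬ v.asIdeal ∣ I.1 := by
        simp only [dvd_mulP, true_or, true_and]
        refine forall₂_congr fun v hv => ?_
        have : v ≠ p := fun h => hp (h ▸ hv)
        simp [this]
      rw [if_congr e1 rfl rfl, nn_mulP, Real.mul_rpow (by have := two_le_qq p; linarith) (by positivity)]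
      split_ifs <;> simp
    · intro I hI
      have : p.asIdeal ∣ I.1 := by
        by_contra h
        simp [h] at hI
      exact exists_mulP this
  rw [h2] at h1
  linear_combination -h1

lemma ZZ_prod {s : ℝ} (hs : 1 < s) (S : Finset (HeightOneSpectrum (𝓞 K))) :
    ZZ K s S = (∑' I : XX K, (nn K I : ℝ) ^ (-s)) * ∏ p ∈ S, (1 - qq p ^ (-s)) := by
  classical
  induction S using Finset.induction_on with
  | empty => simp [ZZ]
  | insert p S hp ih => rw [ZZ_insert K hs S p hp, ih, Finset.prod_insert hp]; ring

lemma exists_prime_dvd {I : XX K} (h : I.1 ≠ ⊤) : ∃ p : HeightOneSpectrum (𝓞 K), p.asIdeal ∣ I.1 := by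
  obtain ⟨M, hM, hle⟩ := Ideal.exists_le_maximal I.1 h
  refine ⟨⟨M, hM.isPrime, ?_⟩, Ideal.dvd_iff_le.mpr hle⟩
  rintro rfl
  exact I.2 (le_bot_iff.mp hle)

lemma ZZ_tendsto {s : ℝ} (hs : 1 < s) : Tendsto (ZZ K s) atTop (𝓝 1) := by
  classical
  have h := tendsto_tsum_of_dominated_convergence (𝓕 := atTop)
    (f := fun (S : Finset (HeightOneSpectrum (𝓞 K))) (I : XX K) =>
      if ∀ p ∈ S, ¬ p.asIdeal ∣ I.1 then (nn K I : ℝ) ^ (-s) else 0)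
    (g := fun I : XX K => if I = ⟨⊤, top_ne_bot⟩ then (1 : ℝ) else 0)
    (zeta_hasSum K hs).1 ?_ ?_
  · rw [tsum_ite_eq] at h
    exact h
  · intro I
    refine tendsto_const_nhds.congr' ?_
    by_cases hI : I.1 = ⊤
    · obtain ⟨I, hI0⟩ := I
      subst hI
      refine Eventually.of_forall fun S => ?_
      have : ∀ p ∈ S, ¬ p.asIdeal ∣ (⊤ : Ideal (𝓞 K)) := fun p _ hd =>
        p.prime.not_isUnit (isUnit_of_dvd_one (by rwa [Ideal.one_eq_top]))
      beta_reduce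
      rw [if_pos this, if_pos rfl]
      simp [nn]
    · obtain ⟨p, hp⟩ := exists_prime_dvd K hI
      filter_upwards [eventually_ge_atTop {p}] with S hS
      rw [if_neg (fun h => hI (congrArg Subtype.val h)), if_neg]
      intro h
      exact h p (hS (Finset.mem_singleton_self p)) hp
  · refine Eventually.of_forall fun S I => ?_
    split_ifs
    · rw [Real.norm_of_nonneg (by positivity)]
    · simp; positivity

lemma euler_tendsto {s : ℝ} (hs : 1 < s) :
    (∑' I : XX K, (nn K I : ℝ) ^ (-s)) ≠ 0 ∧
    Tendsto (fun S : Finset (HeightOneSpectrum (𝓞 K)) => ∏ p ∈ S, (1 - qq p ^ (-s))) atTop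
      (𝓝 (∑' I : XX K, (nn K I : ℝ) ^ (-s))⁻¹) := by
  have h := ZZ_tendsto K hs
  rw [funext (ZZ_prod K hs)] at h
  have h0 : (∑' I : XX K, (nn K I : ℝ) ^ (-s)) ≠ 0 := by
    intro h0
    rw [h0] at h
    simp only [zero_mul] at h
    exact zero_ne_one (tendsto_nhds_unique tendsto_const_nhds h)
  refine ⟨h0, ?_⟩
  have h2 := h.const_mul (∑' I : XX K, (nn K I : ℝ) ^ (-s))⁻¹
  rw [mul_one] at h2
  refine h2.congr fun S => ?_
  field_simp

/-- the finite constants -/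
noncomputable def CC (S : Finset (HeightOneSpectrum (𝓞 K))) : ℝ :=
  ∏ p ∈ S, (1 - 1 / qq p + 1 / (qq p - 1))

lemma CC_tendsto : Tendsto (CC K) atTop
    (𝓝 ((∑' I : XX K, (nn K I : ℝ) ^ (-(2 : ℝ))) * (∑' I : XX K, (nn K I : ℝ) ^ (-(3 : ℝ))) /
      (∑' I : XX K, (nn K I : ℝ) ^ (-(6 : ℝ))))) := by
  obtain ⟨h20, h2⟩ := euler_tendsto K (s := 2) (by norm_num)
  obtain ⟨h30, h3⟩ := euler_tendsto K (s := 3) (by norm_num)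
  obtain ⟨h60, h6⟩ := euler_tendsto K (s := 6) (by norm_num)
  have h := h6.div (h2.mul h3) (mul_ne_zero (inv_ne_zero h20) (inv_ne_zero h30))
  convert! h.congr fun S => ?_ using 2
  · field_simp
  · rw [Pi.div_apply]
    symm
    rw [← Finset.prod_mul_distrib, ← Finset.prod_div_distrib, CC]
    refine Finset.prod_congr rfl fun p _ => ?_
    have hq := two_le_qq p
    have hq0 : 0 < qq p := by linarith
    have e : ∀ n : ℕ, qq p ^ (-(n : ℝ)) = 1 / qq p ^ n := by
      intro n; rw [Real.rpow_neg hq0.le, Real.rpow_natCast, one_div]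
    have e2 := e 2
    have e3 := e 3
    have e6 := e 6
    push_cast at e2 e3 e6
    rw [e2, e3, e6]
    have a1 : qq p - 1 ≠ 0 := by linarith
    have a2 : qq p ^ 2 - 1 ≠ 0 := by nlinarith
    have a3 : qq p ^ 3 - 1 ≠ 0 := by
      have : qq p ^ 3 - 1 = (qq p - 1) * (qq p ^ 2 + qq p + 1) := by ring
      rw [this]; exact mul_ne_zero a1 (by positivity)
    field_simp
    ring

end euler

end TotMean
namespace TotMean

open IsDedekindDomain Filter Topology

section finiteS
variable (K : Type*) [Field K] [NumberField K]

variable {K} in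
lemma mm_bounds (p : HeightOneSpectrum (𝓞 K)) : 1 / 2 ≤ mm p ∧ mm p ≤ 1 ∧ 0 < mm p ∧
    qq p * mm p = qq p - 1 := by
  have hq := two_le_qq p
  have : 1 / qq p ≤ 1 / 2 := one_div_le_one_div_of_le (by norm_num) hq
  have h0 : 0 < 1 / qq p := by positivity
  unfold mm
  refine ⟨by linarith, by linarith, by linarith, ?_⟩
  field_simp

open Classical in
/-- truncated totient -/
noncomputable def phiS (S : Finset (HeightOneSpectrum (𝓞 K))) (I : XX K) : ℝ :=
  (nn K I : ℝ) * ∏ p ∈ S, if p.asIdeal ∣ I.1 then mm p else 1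

lemma phiS_ge (S : Finset (HeightOneSpectrum (𝓞 K))) (I : XX K) :
    (nn K I : ℝ) * (1 / 2) ^ S.card ≤ phiS K S I := by
  unfold phiS
  gcongr
  rw [← Finset.prod_const]
  refine Finset.prod_le_prod (fun _ _ => by norm_num) fun p _ => ?_
  have := mm_bounds p
  split_ifs
  · linarith
  · norm_num

lemma phiS_finite (S : Finset (HeightOneSpectrum (𝓞 K))) (x : ℝ) :
    {I : XX K | phiS K S I ≤ x}.Finite := by
  refine (finite_nn_le_real K (x / (1 / 2) ^ S.card)).subset fun I hI => ?_
  rw [Set.mem_ofPred_eq, le_div_iff₀ (by positivity)]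
  exact (phiS_ge K S I).trans hI

/-- counting function of the truncated totient -/
noncomputable def FF (S : Finset (HeightOneSpectrum (𝓞 K))) (x : ℝ) : ℕ :=
  {I : XX K | phiS K S I ≤ x}.ncard

lemma phiS_mulP {S : Finset (HeightOneSpectrum (𝓞 K))} {p : HeightOneSpectrum (𝓞 K)} (hp : p ∉ S)
    (I : XX K) : phiS K S (mulP p I) = qq p * phiS K S I := by
  classical
  unfold phiS
  rw [nn_mulP, mul_assoc]
  congr 2
  refine Finset.prod_congr rfl fun v hv => ?_
  have : v ≠ p := fun h => hp (h ▸ hv)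
  simp [dvd_mulP, this]

lemma dvd_count {S : Finset (HeightOneSpectrum (𝓞 K))} {p : HeightOneSpectrum (𝓞 K)} (hp : p ∉ S)
    (y : ℝ) : {I : XX K | phiS K S I ≤ y ∧ p.asIdeal ∣ I.1}.ncard = FF K S (y / qq p) := by
  have hq := two_le_qq p
  unfold FF
  rw [← Set.ncard_image_of_injective {I : XX K | phiS K S I ≤ y / qq p} (mulP_injective p)]
  congr 1
  ext I
  simp only [Set.mem_ofPred_eq, Set.mem_image]
  constructor
  · rintro ⟨h1, h2⟩
    obtain ⟨J, rfl⟩ := exists_mulP h2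
    refine ⟨J, ?_, rfl⟩
    rw [phiS_mulP K hp] at h1
    rw [le_div_iff₀ (by linarith)]
    linarith
  · rintro ⟨J, h, rfl⟩
    rw [le_div_iff₀ (by linarith)] at h
    rw [phiS_mulP K hp, dvd_mulP]
    exact ⟨by linarith, Or.inl rfl⟩

lemma split_count (A : Set (XX K)) (hA : A.Finite) (p : HeightOneSpectrum (𝓞 K)) :
    A.ncard = {I | I ∈ A ∧ ¬ p.asIdeal ∣ I.1}.ncard + {I | I ∈ A ∧ p.asIdeal ∣ I.1}.ncard := by
  rw [← Set.ncard_union_eq ?_ (hA.subset fun I h => h.1) (hA.subset fun I h => h.1)]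
  · congr 1
    ext I
    simp only [Set.mem_union, Set.mem_ofPred_eq]
    tauto
  · rw [Set.disjoint_left]
    rintro I ⟨_, h⟩ ⟨_, h'⟩
    exact h h'

open Classical in
lemma FF_insert {S : Finset (HeightOneSpectrum (𝓞 K))} {p : HeightOneSpectrum (𝓞 K)} (hp : p ∉ S)
    (x : ℝ) : FF K (insert p S) x + FF K S (x / qq p) = FF K S x + FF K S (x / (qq p - 1)) := by
  have hq := two_le_qq p
  obtain ⟨hm1, hm2, hm3, hm4⟩ := mm_bounds p
  have hphi : ∀ I : XX K, phiS K (insert p S) I =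
      phiS K S I * if p.asIdeal ∣ I.1 then mm p else 1 := by
    intro I
    unfold phiS
    rw [Finset.prod_insert hp]; ring
  have h1 := split_count K _ (phiS_finite K (insert p S) x) p
  have h2 := split_count K _ (phiS_finite K S x) p
  have h3 : {I : XX K | I ∈ {I | phiS K (insert p S) I ≤ x} ∧ ¬ p.asIdeal ∣ I.1} =
      {I : XX K | I ∈ {I | phiS K S I ≤ x} ∧ ¬ p.asIdeal ∣ I.1} := by
    ext I
    simp only [Set.mem_ofPred_eq]
    refine and_congr_left fun h => ?_
    rw [hphi, if_neg h, mul_one]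
  have h4 : {I : XX K | I ∈ {I | phiS K (insert p S) I ≤ x} ∧ p.asIdeal ∣ I.1} =
      {I : XX K | phiS K S I ≤ x / mm p ∧ p.asIdeal ∣ I.1} := by
    ext I
    simp only [Set.mem_ofPred_eq]
    refine and_congr_left fun h => ?_
    rw [hphi, if_pos h, le_div_iff₀ hm3]
  have h5 := dvd_count K hp x
  have h6 := dvd_count K hp (x / mm p)
  have h7 : x / mm p / qq p = x / (qq p - 1) := by
    rw [div_div, mul_comm, hm4]
  rw [h7] at h6
  rw [h3, h4, h6] at h1
  simp only [Set.mem_ofPred_eq] at h1 h2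
  rw [h5] at h2
  unfold FF at *
  omega

lemma tendsto_scale {f : ℝ → ℝ} {L a : ℝ} (ha : 0 < a)
    (h : Tendsto (fun x => f x / x) atTop (𝓝 L)) :
    Tendsto (fun x => f (x * a) / x) atTop (𝓝 (L * a)) := by
  have h1 : Tendsto (fun x : ℝ => x * a) atTop atTop := tendsto_id.atTop_mul_const ha
  refine ((h.comp h1).mul_const a).congr fun x => ?_
  simp only [Function.comp_apply]
  rw [div_mul_eq_mul_div, mul_div_mul_right _ _ ha.ne']

lemma FF_tendsto (S : Finset (HeightOneSpectrum (𝓞 K))) :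
    Tendsto (fun x : ℝ => (FF K S x : ℝ) / x) atTop (𝓝 (dedekindZeta_residue K * CC K S)) := by
  classical
  induction S using Finset.induction_on with
  | empty => simpa [FF, phiS, CC] using A_tendsto K
  | insert p S hp ih =>
    have hq := two_le_qq p
    have h1 := tendsto_scale (f := fun x => (FF K S x : ℝ)) (a := 1 / qq p) (by positivity) ih
    have h2 := tendsto_scale (f := fun x => (FF K S x : ℝ)) (a := 1 / (qq p - 1))
      (one_div_pos.mpr (by linarith)) ih
    have h3 := (ih.sub h1).add h2
    convert! h3.congr fun x => ?_ using 2
    · rw [CC, Finset.prod_insert hp, ← CC]; ring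
    · have := FF_insert K hp x
      have h : (FF K (insert p S) x : ℝ) + FF K S (x / qq p) = FF K S x + FF K S (x / (qq p - 1)) := by
        exact_mod_cast this
      rw [mul_one_div, mul_one_div, ← sub_div, ← add_div]
      congr 1
      linarith

lemma FF_bound (S : Finset (HeightOneSpectrum (𝓞 K))) :
    ∃ c : ℝ, 0 ≤ c ∧ ∀ x : ℝ, 0 ≤ x → (FF K S x : ℝ) ≤ c * x := by
  classical
  induction S using Finset.induction_on with
  | empty =>
    have h := (A_tendsto K).eventually_le_const (lt_add_one (dedekindZeta_residue K))
    obtain ⟨x0, hx0⟩ := (h.and (eventually_ge_atTop 1)).exists_forall_of_atTop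
    have hx01 : 1 ≤ x0 := (hx0 x0 le_rfl).2
    have hF : ∀ x, FF K ∅ x = {I : XX K | (nn K I : ℝ) ≤ x}.ncard := by
      intro x; simp [FF, phiS]
    have hκ := dedekindZeta_residue_pos K
    refine ⟨dedekindZeta_residue K + 1 + FF K ∅ x0, by positivity, fun x hx => ?_⟩
    rcases lt_or_ge x 1 with h1 | h1
    · have : FF K ∅ x = 0 := by
        rw [hF, Set.ncard_eq_zero (finite_nn_le_real K x), Set.eq_empty_iff_forall_notMem]
        intro I hI
        have h2 : (1 : ℝ) ≤ nn K I := by exact_mod_cast nn_pos K I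
        have h3 : (nn K I : ℝ) ≤ x := hI
        linarith
      rw [this]
      push_cast
      positivity
    · rcases lt_or_ge x x0 with h2 | h2
      · have h3 : FF K ∅ x ≤ FF K ∅ x0 := by
          rw [hF, hF]
          exact Set.ncard_le_ncard (fun I hI => le_trans hI h2.le) (finite_nn_le_real K x0)
        have h4 : (FF K ∅ x : ℝ) ≤ FF K ∅ x0 := by exact_mod_cast h3
        have h5 : (0 : ℝ) ≤ FF K ∅ x0 := by positivity
        nlinarith
      · have h3 := (hx0 x h2).1
        rw [← hF, div_le_iff₀ (by linarith)] at h3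
        have h5 : (0 : ℝ) ≤ FF K ∅ x0 := by positivity
        nlinarith
  | insert p S hp ih =>
    obtain ⟨c, hc, h⟩ := ih
    have hq := two_le_qq p
    refine ⟨c + c, by positivity, fun x hx => ?_⟩
    have h1 := FF_insert K hp x
    have h2 : (FF K (insert p S) x : ℝ) ≤ FF K S x + FF K S (x / (qq p - 1)) := by
      exact_mod_cast (by omega :
        FF K (insert p S) x ≤ FF K S x + FF K S (x / (qq p - 1)))
    have h3 := h x hx
    have h4 := h (x / (qq p - 1)) (div_nonneg hx (by linarith))
    have h5 : x / (qq p - 1) ≤ x := div_le_self hx (by linarith)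
    nlinarith

end finiteS

end TotMean
namespace TotMean

open IsDedekindDomain Filter Topology ENNReal

section full
variable (K : Type*) [Field K] [NumberField K]

/-- the totient -/
noncomputable def phi (I : XX K) : ℝ := (Nat.card ((𝓞 K ⧸ I.1)ˣ) : ℝ)

lemma phi_eq (I : XX K) : phi K I = (nn K I : ℝ) * ∏ p ∈ PP I.1 I.2, mm p :=
  totient_formula I.1 I.2

lemma one_le_phi (I : XX K) : 1 ≤ phi K I := by
  have := finite_quot I.2
  unfold phi
  exact_mod_cast Nat.card_pos

lemma phi_factor (S : Finset (HeightOneSpectrum (𝓞 K))) [DecidableEq (HeightOneSpectrum (𝓞 K))]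
    (I : XX K) : phi K I = phiS K S I * ∏ p ∈ PP I.1 I.2 \ S, mm p := by
  classical
  rw [phi_eq, phiS, mul_assoc]
  congr 1
  rw [← Finset.prod_inter_mul_prod_sdiff (PP I.1 I.2) S, ← Finset.prod_filter]
  congr 1
  refine Finset.prod_congr ?_ fun _ _ => rfl
  ext p
  simp [mem_PP, and_comm]

lemma phi_le_phiS (S : Finset (HeightOneSpectrum (𝓞 K))) (I : XX K) : phi K I ≤ phiS K S I := by
  classical
  rw [phi_factor K S]
  refine mul_le_of_le_one_right ?_ (Finset.prod_le_one (fun p _ => (mm_bounds p).2.2.1.le)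
    fun p _ => (mm_bounds p).2.1)
  exact le_trans (by positivity) (phiS_ge K S I)

lemma phi_mulP (p : HeightOneSpectrum (𝓞 K)) (I : XX K) :
    (qq p - 1) * phi K I ≤ phi K (mulP p I) := by
  classical
  obtain ⟨h1, h2, h3, h4⟩ := mm_bounds p
  have hq := two_le_qq p
  have hPP : PP (mulP p I).1 (mulP p I).2 = insert p (PP I.1 I.2) := by
    ext v
    simp [mem_PP, dvd_mulP]
  have hpos := one_le_phi K I
  rw [phi_eq K (mulP p I), nn_mulP, hPP]
  by_cases h : p ∈ PP I.1 I.2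
  · rw [Finset.insert_eq_of_mem h, mul_assoc, ← phi_eq]
    nlinarith
  · rw [Finset.prod_insert h, ← h4, phi_eq K I]
    apply le_of_eq; ring

open Classical in
/-- counting function of the totient -/
noncomputable def Phi (x : ℝ) : ℝ≥0∞ := ∑' I : XX K, if phi K I ≤ x then 1 else 0

variable {K} in
/-- weights -/
noncomputable def WW (l : ℝ) (p : HeightOneSpectrum (𝓞 K)) : ℝ≥0∞ :=
  ENNReal.ofReal (1 / ((qq p - 1) * Real.log l))

open Classical in
lemma Phi_dvd (p : HeightOneSpectrum (𝓞 K)) (x : ℝ) :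
    (∑' I : XX K, if p.asIdeal ∣ I.1 ∧ phi K I ≤ x then (1 : ℝ≥0∞) else 0) ≤ Phi K (x / (qq p - 1)) := by
  have hq := two_le_qq p
  rw [← (mulP_injective p).tsum_eq]
  · unfold Phi
    refine ENNReal.tsum_le_tsum fun I => ?_
    by_cases h : phi K (mulP p I) ≤ x
    · have : phi K I ≤ x / (qq p - 1) := by
        rw [le_div_iff₀ (by linarith)]
        have := phi_mulP K p I
        linarith
      rw [if_pos this]
      split_ifs <;> simp
    · simp [h]
  · intro I hI
    have : p.asIdeal ∣ I.1 := by
      by_contra h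
      simp [h] at hI
    exact exists_mulP this

open Classical in
lemma pointwise {l : ℝ} (hl : 1 < l) (S : Finset (HeightOneSpectrum (𝓞 K))) (x : ℝ) (I : XX K) :
    (if phi K I ≤ x then (1 : ℝ≥0∞) else 0) ≤ (if phiS K S I ≤ x * l then 1 else 0) +
      ∑' p : HeightOneSpectrum (𝓞 K), (if p ∈ S then 0 else WW l p) *
        if p.asIdeal ∣ I.1 ∧ phi K I ≤ x then 1 else 0 := by
  by_cases h1 : phi K I ≤ x
  swap
  · simp [h1]
  by_cases h2 : phiS K S I ≤ x * l
  · simp [h1, h2]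
  rw [if_pos h1, if_neg h2, zero_add]
  have hlog : 0 < Real.log l := Real.log_pos hl
  have hx : 1 ≤ x := (one_le_phi K I).trans h1
  have hT : ∏ p ∈ PP I.1 I.2 \ S, mm p < 1 / l := by
    rw [lt_div_iff₀ (by linarith)]
    by_contra hcon
    push Not at hcon h2
    rw [phi_factor K S] at h1
    have hP : 0 < ∏ p ∈ PP I.1 I.2 \ S, mm p := Finset.prod_pos fun p _ => (mm_bounds p).2.2.1
    have := mul_lt_mul_of_pos_right h2 hP
    nlinarith
  have hsum : 1 ≤ ∑ p ∈ PP I.1 I.2 \ S, 1 / ((qq p - 1) * Real.log l) := by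
    have h3 := Real.log_lt_log (Finset.prod_pos fun p _ => (mm_bounds p).2.2.1) hT
    rw [Real.log_prod (fun p _ => (mm_bounds p).2.2.1.ne'), one_div, Real.log_inv] at h3
    have h4 : ∑ p ∈ PP I.1 I.2 \ S, -(1 / (qq p - 1)) ≤ ∑ p ∈ PP I.1 I.2 \ S, Real.log (mm p) := by
      refine Finset.sum_le_sum fun p _ => ?_
      obtain ⟨_, _, h5, h6⟩ := mm_bounds p
      have hq := two_le_qq p
      have h7 := Real.log_le_sub_one_of_pos (inv_pos.mpr h5)
      rw [Real.log_inv] at h7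
      have h8 : (mm p)⁻¹ - 1 = 1 / (qq p - 1) := by
        have : mm p = (qq p - 1) / qq p := by rw [← h6]; field_simp
        have h9 : qq p - 1 ≠ 0 := by linarith
        rw [this]; field_simp; ring
      linarith
    rw [Finset.sum_neg_distrib] at h4
    have h5 : ∑ p ∈ PP I.1 I.2 \ S, 1 / ((qq p - 1) * Real.log l) =
        (∑ p ∈ PP I.1 I.2 \ S, 1 / (qq p - 1)) / Real.log l := by
      rw [Finset.sum_div]
      refine Finset.sum_congr rfl fun p _ => ?_
      rw [div_div]
    rw [h5, le_div_iff₀ hlog]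
    linarith
  calc (1 : ℝ≥0∞) = ENNReal.ofReal 1 := by simp
    _ ≤ ENNReal.ofReal (∑ p ∈ PP I.1 I.2 \ S, 1 / ((qq p - 1) * Real.log l)) :=
      ENNReal.ofReal_le_ofReal hsum
    _ = ∑ p ∈ PP I.1 I.2 \ S, WW l p := by
      rw [ENNReal.ofReal_sum_of_nonneg]
      · rfl
      · intro p _
        have hq := two_le_qq p
        have : 0 < qq p - 1 := by linarith
        positivity
    _ = ∑ p ∈ PP I.1 I.2 \ S, (if p ∈ S then 0 else WW l p) *
        if p.asIdeal ∣ I.1 ∧ phi K I ≤ x then 1 else 0 := by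
      refine Finset.sum_congr rfl fun p hp => ?_
      rw [Finset.mem_sdiff, mem_PP] at hp
      simp [hp.1, hp.2, h1]
    _ ≤ _ := ENNReal.sum_le_tsum _

lemma count_tsum (A : Set (XX K)) [DecidablePred (· ∈ A)] (hA : A.Finite) :
    (∑' I : XX K, if I ∈ A then (1 : ℝ≥0∞) else 0) = (A.ncard : ℝ≥0∞) := by
  have h : (∑' I : XX K, if I ∈ A then (1 : ℝ≥0∞) else 0) = ∑' I : A, 1 := by
    rw [tsum_subtype A (fun _ => (1 : ℝ≥0∞))]
    refine tsum_congr fun I => ?_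
    by_cases h : I ∈ A <;> simp [h]
  rw [h, ENNReal.tsum_set_one, ← hA.cast_ncard_eq]
  simp

open Classical in
lemma Phi_le {l : ℝ} (hl : 1 < l) (S : Finset (HeightOneSpectrum (𝓞 K))) (x : ℝ) :
    Phi K x ≤ (FF K S (x * l) : ℝ≥0∞) +
      ∑' p : HeightOneSpectrum (𝓞 K), (if p ∈ S then 0 else WW l p) * Phi K (x / (qq p - 1)) := by
  calc Phi K x ≤ ∑' I : XX K, ((if phiS K S I ≤ x * l then 1 else 0) +
      ∑' p : HeightOneSpectrum (𝓞 K), (if p ∈ S then 0 else WW l p) *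
        if p.asIdeal ∣ I.1 ∧ phi K I ≤ x then 1 else 0) :=
        ENNReal.tsum_le_tsum (pointwise K hl S x)
    _ = (FF K S (x * l) : ℝ≥0∞) + ∑' p : HeightOneSpectrum (𝓞 K), (if p ∈ S then 0 else WW l p) *
        ∑' I : XX K, if p.asIdeal ∣ I.1 ∧ phi K I ≤ x then 1 else 0 := by
        rw [ENNReal.tsum_add, ENNReal.tsum_comm]
        simp_rw [ENNReal.tsum_mul_left]
        congr 1
        exact count_tsum K {I | phiS K S I ≤ x * l} (phiS_finite K S _)
    _ ≤ _ := by
        gcongr with p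
        exact Phi_dvd K p x

open Classical in
/-- the tail -/
noncomputable def TT (l : ℝ) (S : Finset (HeightOneSpectrum (𝓞 K))) : ℝ≥0∞ :=
  ∑' p : HeightOneSpectrum (𝓞 K), (if p ∈ S then 0 else WW l p) * ENNReal.ofReal (1 / (qq p - 1))

lemma summable_primes :
    Summable (fun p : HeightOneSpectrum (𝓞 K) => qq p ^ (-(2 : ℝ))) := by
  have h := (zeta_hasSum K (s := 2) (by norm_num)).1
  let f : HeightOneSpectrum (𝓞 K) → XX K := fun p => ⟨p.asIdeal, p.ne_bot⟩
  have hf : Function.Injective f := fun p v h => HeightOneSpectrum.ext (congrArg Subtype.val h)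
  have h2 := h.comp_injective hf
  refine h2.congr fun p => ?_
  have e : qq p = (nn K (f p) : ℝ) := by simp only [qq, nn, f]
  rw [e]
  rfl

lemma TT_tendsto {l : ℝ} (hl : 1 < l) : Tendsto (TT K l) atTop (𝓝 0) := by
  classical
  have hlog : 0 < Real.log l := Real.log_pos hl
  have h1 : ∑' p : HeightOneSpectrum (𝓞 K), WW l p * ENNReal.ofReal (1 / (qq p - 1)) ≠ ∞ := by
    have hs := ((summable_primes K).mul_left (4 / Real.log l)).tsum_ofReal_ne_top
    refine ne_top_of_le_ne_top hs (ENNReal.tsum_le_tsum fun p => ?_)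
    have hq := two_le_qq p
    have hq1 : 0 < qq p - 1 := by linarith
    have e : qq p ^ (-(2 : ℝ)) = 1 / qq p ^ 2 := by
      rw [Real.rpow_neg (by linarith), one_div]
      norm_cast
    unfold WW
    rw [← ENNReal.ofReal_mul (by positivity), e]
    refine ENNReal.ofReal_le_ofReal ?_
    have h2 : (1 : ℝ) / (qq p - 1) ≤ 2 / qq p := by
      rw [div_le_div_iff₀ hq1 (by linarith)]; linarith
    have h3 : 0 < 1 / (qq p - 1) := by positivity
    have h4 : (1 / (qq p - 1)) * (1 / (qq p - 1)) ≤ (2 / qq p) * (2 / qq p) :=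
      mul_le_mul h2 h2 h3.le (by positivity)
    calc 1 / ((qq p - 1) * Real.log l) * (1 / (qq p - 1))
        = (1 / (qq p - 1)) * (1 / (qq p - 1)) / Real.log l := by field_simp
      _ ≤ (2 / qq p) * (2 / qq p) / Real.log l := by gcongr
      _ = 4 / Real.log l * (1 / qq p ^ 2) := by field_simp; norm_num
  have h2 := ENNReal.tendsto_tsum_compl_atTop_zero h1
  refine h2.congr fun S => ?_
  unfold TT
  refine (tsum_subtype {p | p ∉ S} (fun p => WW l p * ENNReal.ofReal (1 / (qq p - 1)))).trans ?_
  refine tsum_congr fun p => ?_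
  by_cases h : p ∈ S <;> simp [h]

lemma Phi_bound : ∃ c : ℝ, 0 ≤ c ∧ ∀ x : ℝ, 0 ≤ x → Phi K x ≤ ENNReal.ofReal (c * x) := by
  classical
  have hfin : {p : HeightOneSpectrum (𝓞 K) | qq p < 3}.Finite := by
    refine (((finite_nn_le_real K 3)).preimage
      (f := fun p : HeightOneSpectrum (𝓞 K) => (⟨p.asIdeal, p.ne_bot⟩ : XX K)) ?_).subset ?_
    · intro p _ v _ h
      exact HeightOneSpectrum.ext (congrArg Subtype.val h)
    · intro p hp
      have h3 : qq p < 3 := hp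
      have e : (nn K ⟨p.asIdeal, p.ne_bot⟩ : ℝ) = qq p := by simp only [qq, nn]
      have h4 : (nn K ⟨p.asIdeal, p.ne_bot⟩ : ℝ) ≤ 3 := e.trans_le h3.le
      exact h4
  have hev := ((TT_tendsto K (l := 2) (by norm_num)).eventually_le_const
    (show (0 : ℝ≥0∞) < ENNReal.ofReal (1 / 2) by simp)).and (eventually_ge_atTop hfin.toFinset)
  obtain ⟨S, hS, hS3⟩ := hev.exists
  obtain ⟨c, hc, hF⟩ := FF_bound K S
  refine ⟨2 * (2 * c), by positivity, ?_⟩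
  have key : ∀ n : ℕ, ∀ x : ℝ, 0 ≤ x → x < 2 ^ n → Phi K x ≤ ENNReal.ofReal (2 * (2 * c) * x) := by
    intro n
    induction n with
    | zero =>
      intro x hx hx1
      have : Phi K x = 0 := by
        unfold Phi
        rw [ENNReal.tsum_eq_zero]
        intro I
        rw [if_neg]
        have := one_le_phi K I
        simp only [pow_zero] at hx1
        linarith
      rw [this]; exact bot_le
    | succ n ih =>
      intro x hx hx1
      calc Phi K x ≤ _ := Phi_le K (l := 2) (by norm_num) S x
        _ ≤ ENNReal.ofReal (2 * c * x) + ∑' p : HeightOneSpectrum (𝓞 K),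
            ENNReal.ofReal (2 * (2 * c) * x) *
            ((if p ∈ S then 0 else WW 2 p) * ENNReal.ofReal (1 / (qq p - 1))) := by
          refine add_le_add ?_ (ENNReal.tsum_le_tsum fun p => ?_)
          · rw [← ENNReal.ofReal_natCast]
            refine ENNReal.ofReal_le_ofReal ?_
            have := hF (x * 2) (by positivity)
            linarith
          · by_cases hp : p ∈ S
            · simp [hp]
            · have hq : 3 ≤ qq p := by
                by_contra h
                exact hp (hS3 (hfin.mem_toFinset.mpr (not_le.mp h)))
              have hq1 : 0 < qq p - 1 := by linarith
              have hxl : x / (qq p - 1) < 2 ^ n := by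
                rw [div_lt_iff₀ hq1]
                have : (0 : ℝ) < 2 ^ n := by positivity
                rw [pow_succ] at hx1
                nlinarith
              have := ih (x / (qq p - 1)) (by positivity) hxl
              rw [mul_left_comm, ← ENNReal.ofReal_mul (by positivity)]
              gcongr
              rw [mul_one_div, mul_div_assoc]
              exact this
        _ = ENNReal.ofReal (2 * c * x) + ENNReal.ofReal (2 * (2 * c) * x) * TT K 2 S := by
          rw [ENNReal.tsum_mul_left, TT]
        _ ≤ ENNReal.ofReal (2 * c * x) + ENNReal.ofReal (2 * (2 * c) * x) * ENNReal.ofReal (1 / 2) := by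
          gcongr
        _ = ENNReal.ofReal (2 * (2 * c) * x) := by
          rw [← ENNReal.ofReal_mul (by positivity), ← ENNReal.ofReal_add (by positivity) (by positivity)]
          congr 1
          ring
  intro x hx
  obtain ⟨n, hn⟩ := pow_unbounded_of_one_lt x (one_lt_two (α := ℝ))
  exact key n x hx hn

end full

end TotMean
namespace TotMean

open IsDedekindDomain Filter Topology ENNReal

section final
variable (K : Type*) [Field K] [NumberField K]

lemma phi_finite (x : ℝ) : {I : XX K | phi K I ≤ x}.Finite := by
  classical
  obtain ⟨c, _, hb⟩ := Phi_bound K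
  have h1 : Phi K (max x 0) ≠ ∞ := ne_top_of_le_ne_top ENNReal.ofReal_ne_top (hb _ (le_max_right _ _))
  have h2 : {I : XX K | phi K I ≤ max x 0}.Finite := by
    by_contra hinf
    apply h1
    have e : Phi K (max x 0) = ∑' I : ({I : XX K | phi K I ≤ max x 0} : Set (XX K)), (1 : ℝ≥0∞) := by
      rw [tsum_subtype {I : XX K | phi K I ≤ max x 0} (fun _ => (1 : ℝ≥0∞))]
      unfold Phi
      refine tsum_congr fun I => ?_
      by_cases h : phi K I ≤ max x 0
      · rw [if_pos h, Set.indicator_of_mem]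
        exact h
      · rw [if_neg h, Set.indicator_of_notMem]
        exact h
    rw [e, ENNReal.tsum_set_one, Set.Infinite.encard_eq hinf]
    rfl
  refine h2.subset fun I hI => ?_
  have h : phi K I ≤ x := hI
  exact h.trans (le_max_left x 0)

/-- the counting function of totients -/
noncomputable def GG (x : ℝ) : ℕ := {I : XX K | phi K I ≤ x}.ncard

lemma Phi_eq (x : ℝ) : Phi K x = (GG K x : ℝ≥0∞) := by
  classical
  unfold GG
  rw [← count_tsum K _ (phi_finite K x)]
  unfold Phi
  refine tsum_congr fun I => ?_
  by_cases h : phi K I ≤ x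
  · rw [if_pos h, if_pos]
    exact h
  · rw [if_neg h, if_neg]
    exact h

lemma FF_le_GG (S : Finset (HeightOneSpectrum (𝓞 K))) (x : ℝ) : FF K S x ≤ GG K x := by
  unfold FF GG
  refine Set.ncard_le_ncard (fun I hI => ?_) (phi_finite K x)
  have h : phiS K S I ≤ x := hI
  exact (phi_le_phiS K S I).trans h

lemma GG_le {l : ℝ} (hl : 1 < l) : ∃ c : ℝ, 0 ≤ c ∧ ∀ (S : Finset (HeightOneSpectrum (𝓞 K))),
    ∀ ε : ℝ, 0 ≤ ε → TT K l S ≤ ENNReal.ofReal ε → ∀ x : ℝ, 0 ≤ x →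
      (GG K x : ℝ) ≤ FF K S (x * l) + c * ε * x := by
  classical
  obtain ⟨c, hc, hb⟩ := Phi_bound K
  refine ⟨c, hc, fun S ε hε hT x hx => ?_⟩
  have h : Phi K x ≤ ENNReal.ofReal (FF K S (x * l) + c * ε * x) := by
    calc Phi K x ≤ _ := Phi_le K hl S x
      _ ≤ ENNReal.ofReal (FF K S (x * l)) + ∑' p : HeightOneSpectrum (𝓞 K),
            ENNReal.ofReal (c * x) *
            ((if p ∈ S then 0 else WW l p) * ENNReal.ofReal (1 / (qq p - 1))) := by
          refine add_le_add ?_ (ENNReal.tsum_le_tsum fun p => ?_)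
          · rw [ENNReal.ofReal_natCast]
          · have hq := two_le_qq p
            have hq1 : 0 < qq p - 1 := by linarith
            have := hb (x / (qq p - 1)) (by positivity)
            rw [mul_left_comm, ← ENNReal.ofReal_mul (by positivity)]
            gcongr
            rw [mul_one_div, mul_div_assoc]
            exact this
      _ = ENNReal.ofReal (FF K S (x * l)) + ENNReal.ofReal (c * x) * TT K l S := by
          rw [ENNReal.tsum_mul_left, TT]
      _ ≤ ENNReal.ofReal (FF K S (x * l)) + ENNReal.ofReal (c * x) * ENNReal.ofReal ε := by
          gcongr
      _ = _ := by
          rw [← ENNReal.ofReal_mul (by positivity),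
            ← ENNReal.ofReal_add (by positivity) (by positivity)]
          congr 1
          ring
  rw [Phi_eq, ← ENNReal.ofReal_natCast] at h
  exact (ENNReal.ofReal_le_ofReal_iff (by positivity)).mp h

lemma GG_tendsto {C : ℝ} (hC : Tendsto (CC K) atTop (𝓝 C)) :
    Tendsto (fun x : ℝ => (GG K x : ℝ) / x) atTop (𝓝 (dedekindZeta_residue K * C)) := by
  have hkC := hC.const_mul (dedekindZeta_residue K)
  rw [tendsto_order]
  constructor
  · intro a ha
    obtain ⟨S, hS⟩ := (hkC.eventually_const_lt ha).exists
    filter_upwards [(FF_tendsto K S).eventually_const_lt hS, eventually_gt_atTop 0] with x h1 h2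
    refine h1.trans_le ?_
    have := FF_le_GG K S x
    gcongr
  · intro a ha
    obtain ⟨l, hl1, hl⟩ : ∃ l : ℝ, dedekindZeta_residue K * C * l < a ∧ 1 < l := by
      have h : Tendsto (fun l : ℝ => dedekindZeta_residue K * C * l) (𝓝[>] 1)
          (𝓝 (dedekindZeta_residue K * C * 1)) :=
        ((continuous_const.mul continuous_id).tendsto 1).mono_left nhdsWithin_le_nhds
      rw [mul_one] at h
      exact ((h.eventually_lt_const ha).and self_mem_nhdsWithin).exists
    obtain ⟨c, hc, hG⟩ := GG_le K hl
    set d := a - dedekindZeta_residue K * C * l with hd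
    have hd0 : 0 < d := by linarith
    set ε := d / (2 * (c + 1)) with hε
    have hε0 : 0 < ε := by positivity
    have hcε : c * ε ≤ d / 2 := by
      rw [hε, ← mul_div_assoc, div_le_div_iff₀ (by positivity) (by norm_num)]
      nlinarith
    have h1 := (hkC.mul_const l).eventually_lt_const
      (show dedekindZeta_residue K * C * l < dedekindZeta_residue K * C * l + d / 2 by linarith)
    have h2 := (TT_tendsto K hl).eventually_le_const
      (show (0 : ℝ≥0∞) < ENNReal.ofReal ε by simpa using hε0)
    obtain ⟨S, hS1, hS2⟩ := (h1.and h2).exists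
    have h3 := tendsto_scale (f := fun x => (FF K S x : ℝ)) (a := l) (by linarith) (FF_tendsto K S)
    filter_upwards [h3.eventually_lt_const hS1, eventually_gt_atTop 0] with x h4 h5
    have h6 := hG S ε hε0.le hS2 x h5.le
    calc (GG K x : ℝ) / x ≤ (FF K S (x * l) + c * ε * x) / x := by gcongr
      _ = FF K S (x * l) / x + c * ε := by field_simp
      _ < a := by linarith

lemma sum_mult (N : ℕ) : ∑ n ∈ Finset.Icc 1 N, totientMultiplicity K n = GG K N := by
  classical
  let f : XX K → ℕ := fun I => Nat.card ((𝓞 K ⧸ I.1)ˣ)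
  have hf : ∀ I, phi K I = (f I : ℝ) := fun I => rfl
  have hf1 : ∀ I, 1 ≤ f I := fun I => by
    have := one_le_phi K I
    rw [hf] at this
    exact_mod_cast this
  have h1 : ∀ n, totientMultiplicity K n = {I : XX K | f I = n}.ncard := by
    intro n
    unfold totientMultiplicity
    rw [← Nat.card_coe_set_eq]
    exact Nat.card_congr ⟨fun I => ⟨⟨I.1, I.2.1⟩, I.2.2⟩, fun I => ⟨I.1.1, I.1.2, I.2⟩,
      fun _ => rfl, fun _ => rfl⟩
  have hfin := phi_finite K N
  have h2 : ∀ n ∈ Finset.Icc 1 N, totientMultiplicity K n =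
      (hfin.toFinset.filter (fun I => f I = n)).card := by
    intro n hn
    rw [h1, ← Set.ncard_coe_finset]
    congr 1
    ext I
    simp only [Finset.coe_filter, Set.Finite.mem_toFinset, Set.mem_ofPred_eq, hf, Nat.cast_le]
    have := (Finset.mem_Icc.mp hn).2
    constructor
    · intro h; exact ⟨by omega, h⟩
    · exact fun h => h.2
  rw [Finset.sum_congr rfl h2, GG, Set.ncard_eq_toFinset_card _ hfin]
  symm
  refine Finset.card_eq_sum_card_fiberwise fun I hI => ?_
  have h3 : phi K I ≤ N := by simpa using hI
  rw [hf, Nat.cast_le] at h3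
  simpa using ⟨hf1 I, h3⟩

lemma nn_eq (I : XX K) : Nat.card (𝓞 K ⧸ I.1) = nn K I := card_quot I.1

end final

end TotMean

/-- **Mean value of number field totients.**  Let `K` be a number field, `t_K` its totient
multiplicity function, and `ζ_K(σ) = ∑_I N(I)^{−σ}` (over nonzero ideals `I` of `𝓞 K`,
with `N(I) = #(𝓞 K / I)`).  If `ρ` is the residue of `ζ_K` at `σ = 1`, in the sense that
`(σ−1)ζ_K(σ) → ρ` as `σ → 1⁺`, then
`(1/N) ∑_{n=1}^N t_K(n) → ρ · ζ_K(2) ζ_K(3) / ζ_K(6)` as `N → ∞`. -/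
theorem numberField_totient_mean_value
    (K : Type*) [Field K] [NumberField K] (ρ : ℝ)
    (hρ : Filter.Tendsto
      (fun σ : ℝ => (σ - 1) *
        ∑' I : {I : Ideal (𝓞 K) // I ≠ ⊥}, (Nat.card (𝓞 K ⧸ I.1) : ℝ) ^ (-σ))
      (nhdsWithin 1 (Set.Ioi 1)) (nhds ρ)) :
    Filter.Tendsto
      (fun N : ℕ => (1 / (N : ℝ)) * ∑ n ∈ Finset.Icc 1 N, (totientMultiplicity K n : ℝ))
      Filter.atTop
      (nhds (ρ *
        (∑' I : {I : Ideal (𝓞 K) // I ≠ ⊥}, (Nat.card (𝓞 K ⧸ I.1) : ℝ) ^ (-(2 : ℝ))) *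
        (∑' I : {I : Ideal (𝓞 K) // I ≠ ⊥}, (Nat.card (𝓞 K ⧸ I.1) : ℝ) ^ (-(3 : ℝ))) /
        (∑' I : {I : Ideal (𝓞 K) // I ≠ ⊥}, (Nat.card (𝓞 K ⧸ I.1) : ℝ) ^ (-(6 : ℝ))))) := by
  have hρ' : Filter.Tendsto (fun σ : ℝ => (σ - 1) *
      ∑' I : TotMean.XX K, (TotMean.nn K I : ℝ) ^ (-σ)) (nhdsWithin 1 (Set.Ioi 1)) (nhds ρ) := by
    refine hρ.congr fun σ => ?_
    exact congrArg (fun t => (σ - 1) * t) (tsum_congr fun I => by rw [TotMean.nn_eq])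
  have e := TotMean.residue_eq K ρ hρ'
  have h := (TotMean.GG_tendsto K (TotMean.CC_tendsto K)).comp
    (tendsto_natCast_atTop_atTop (R := ℝ))
  rw [← e] at h
  have hz : ∀ s : ℝ, ∑' I : {I : Ideal (𝓞 K) // I ≠ ⊥}, (Nat.card (𝓞 K ⧸ I.1) : ℝ) ^ s =
      ∑' I : TotMean.XX K, (TotMean.nn K I : ℝ) ^ s := fun s =>
    tsum_congr fun I => by rw [TotMean.nn_eq]
  rw [hz, hz, hz, mul_assoc ρ, mul_div_assoc ρ]
  refine h.congr fun N => ?_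
  rw [← Nat.cast_sum, TotMean.sum_mult]
  simp only [Function.comp]
  ring
end

section
/- For a positive integer n let t(n) be the number of positive integers m with Euler totient φ(m) = n. Then the averages (1/N)·∑_{n=1}^{N} t(n) converge as N → ∞ to the real number ζ(2)·ζ(3)/ζ(6), where ζ is the Riemann zeta function; numerically this constant equals (∑_{k≥1} k^{−2})(∑_{k≥1} k^{−3})/(∑_{k≥1} k^{−6}). -/
/-- The totient multiplicity `t(n)`: the number of positive integers `m` with
Euler totient `φ(m) = n`. -/
noncomputable def totientFiberCard (n : ℕ) : ℕ :=
  Nat.card {m : ℕ // 0 < m ∧ Nat.totient m = n}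

open Finset in
theorem tm_totient_bound_aux (n : ℕ) :
    n ^ 3 ≤ Nat.totient n ^ 4 * ((if 2 ∣ n then 8 else 1) * (if 3 ∣ n then 2 else 1)) := by
  induction n using Nat.recOnPosPrimePosCoprime with
  | zero => simp
  | one => simp
  | prime_pow p n hp hn =>
    obtain ⟨k, rfl⟩ : ∃ k, n = k + 1 := ⟨n - 1, by omega⟩
    rw [Nat.totient_prime_pow_succ hp]
    have h1 : (p ^ (k + 1)) ^ 3 ≤ p ^ (4 * k) * p ^ 3 := by
      rw [← pow_mul, ← pow_add]
      exact Nat.pow_le_pow_right hp.pos (by omega)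
    refine h1.trans ?_
    have h2 : (p ^ k * (p - 1)) ^ 4 = p ^ (4 * k) * (p - 1) ^ 4 := by
      rw [mul_pow, ← pow_mul, mul_comm k 4]
    rw [h2, mul_assoc]
    refine Nat.mul_le_mul_left _ ?_
    rcases eq_or_ne p 2 with rfl | h2p
    · have : 2 ∣ 2 ^ (k + 1) := dvd_pow_self 2 (by omega)
      rw [if_pos this]
      split_ifs <;> norm_num
    rcases eq_or_ne p 3 with rfl | h3p
    · have : 3 ∣ 3 ^ (k + 1) := dvd_pow_self 3 (by omega)
      rw [if_pos this]
      split_ifs <;> norm_num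
    · have hp5 : 5 ≤ p := by
        have := hp.two_le
        by_contra h
        have : p = 4 := by omega
        subst this
        exact absurd hp (by norm_num)
      obtain ⟨q, rfl⟩ : ∃ q, p = q + 5 := ⟨p - 5, by omega⟩
      have h3 : (q + 5) ^ 3 ≤ (q + 5 - 1) ^ 4 := by
        have : q + 5 - 1 = q + 4 := by omega
        rw [this]
        ring_nf
        nlinarith [Nat.zero_le (q ^ 4), Nat.zero_le (q ^ 3), Nat.zero_le (q ^ 2), Nat.zero_le q]
      refine h3.trans (Nat.le_mul_of_pos_right _ ?_)
      split_ifs <;> norm_num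
  | coprime a b ha hb hab iha ihb =>
    rw [Nat.totient_mul hab, mul_pow, mul_pow]
    refine (Nat.mul_le_mul iha ihb).trans ?_
    have e : ∀ x y u v u' v' u'' v'' : ℕ, u * u' ≤ u'' → v * v' ≤ v'' →
      x * (u * v) * (y * (u' * v')) ≤ x * y * (u'' * v'') := by
      intro x y u v u' v' u'' v'' h h'
      calc x * (u * v) * (y * (u' * v')) = x * y * ((u * u') * (v * v')) := by ring
        _ ≤ _ := by gcongr
    apply e
    · have : ¬ (2 ∣ a ∧ 2 ∣ b) := fun h => by
        have := Nat.dvd_gcd h.1 h.2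
        rw [hab] at this; omega
      by_cases h1 : 2 ∣ a <;> by_cases h2 : 2 ∣ b <;>
        simp [Nat.prime_two.dvd_mul, h1, h2] <;> tauto
    · have : ¬ (3 ∣ a ∧ 3 ∣ b) := fun h => by
        have := Nat.dvd_gcd h.1 h.2
        rw [hab] at this; omega
      by_cases h1 : 3 ∣ a <;> by_cases h2 : 3 ∣ b <;>
        simp [Nat.prime_three.dvd_mul, h1, h2] <;> tauto

theorem tm_totient_bound (n : ℕ) : n ^ 3 ≤ Nat.totient n ^ 4 * 16 := by
  refine (tm_totient_bound_aux n).trans (Nat.mul_le_mul_left _ ?_)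
  split_ifs <;> norm_num

theorem tm_le_of_totient_le {m N : ℕ} (h : Nat.totient m ≤ N) : m ≤ N ^ 4 * 16 := by
  calc m ≤ m ^ 3 := Nat.le_self_pow (by norm_num) m
    _ ≤ _ := tm_totient_bound m
    _ ≤ _ := by gcongr

/-- The weight `μ²(d)/φ(d)`. -/
noncomputable def tmG (d : ℕ) : ℝ := if Squarefree d then ((Nat.totient d : ℝ))⁻¹ else 0

theorem tmG_nonneg (d : ℕ) : 0 ≤ tmG d := by
  unfold tmG; split_ifs <;> positivity

theorem tmG_le (d : ℕ) (hd : 0 < d) : tmG d ≤ 2 * (d : ℝ) ^ (-(3 / 4) : ℝ) := by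
  have hφ : 0 < (Nat.totient d : ℝ) := by exact_mod_cast Nat.totient_pos.2 hd
  have hd' : (0 : ℝ) < d := by exact_mod_cast hd
  have key : (d : ℝ) ^ (3 / 4 : ℝ) ≤ 2 * Nat.totient d := by
    have h : ((d : ℝ)) ^ 3 ≤ (2 * (Nat.totient d : ℝ)) ^ 4 := by
      have := tm_totient_bound d
      have h' : (d : ℝ) ^ 3 ≤ (Nat.totient d : ℝ) ^ 4 * 16 := by exact_mod_cast this
      rw [mul_pow]; linarith
    have h4 : ((d : ℝ) ^ (3 / 4 : ℝ)) ^ 4 = (d : ℝ) ^ 3 := by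
      rw [← Real.rpow_natCast, ← Real.rpow_mul hd'.le, ← Real.rpow_natCast]
      norm_num
    rw [← h4] at h
    exact le_of_pow_le_pow_left₀ (by norm_num) (by positivity) h
  have h1 : ((Nat.totient d : ℝ))⁻¹ ≤ 2 * (d : ℝ) ^ (-(3 / 4) : ℝ) := by
    rw [Real.rpow_neg hd'.le, ← div_eq_mul_inv, inv_eq_one_div, div_le_div_iff₀ hφ (by positivity)]
    linarith
  unfold tmG
  split_ifs
  · exact h1
  · positivity

open Finset in
theorem tm_sum_divisors (m : ℕ) (hm : 0 < m) :
    ∑ d ∈ m.divisors, tmG d = m / Nat.totient m := by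
  have h1 : ∑ d ∈ m.divisors, tmG d = ∏ p ∈ m.primeFactors, (1 + ((p : ℝ) - 1)⁻¹) := by
    unfold tmG
    rw [← Finset.sum_filter, Nat.sum_divisors_filter_squarefree hm.ne', Finset.prod_one_add]
    have : (UniqueFactorizationMonoid.normalizedFactors m).toFinset = m.primeFactors := by
      rw [Nat.factors_eq]; rfl
    rw [this]
    refine Finset.sum_congr rfl fun t ht => ?_
    have ht' := Finset.mem_powerset.1 ht
    rw [Finset.prod_val]
    have : Nat.totient (∏ x ∈ t, x) = ∏ x ∈ t, (x - 1) := by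
      have ht2 : ∀ x ∈ t, x.Prime := fun x hx => Nat.prime_of_mem_primeFactors (ht' hx)
      clear ht ht'
      induction t using Finset.induction_on with
      | empty => simp
      | insert a s ha ih =>
        rw [Finset.prod_insert ha, Finset.prod_insert ha, Nat.totient_mul, ih,
          Nat.totient_prime (ht2 a (by simp))]
        · exact fun x hx => ht2 x (by simp [hx])
        · refine Nat.Coprime.prod_right fun i hi => ?_
          refine (Nat.coprime_primes (ht2 a (by simp)) (ht2 i (by simp [hi]))).2 ?_
          rintro rfl; exact ha hi
    simp only [id]
    have e : (Nat.totient (∏ x ∈ t, x) : ℝ) = ∏ x ∈ t, ((x : ℝ) - 1) := by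
      rw [this, Nat.cast_prod]
      refine Finset.prod_congr rfl fun x hx => ?_
      rw [Nat.cast_pred (Nat.prime_of_mem_primeFactors (ht' hx)).pos]
    have e2 : (t.prod fun x => x) = ∏ x ∈ t, x := rfl
    rw [Finset.prod_inv_distrib, ← e]
  rw [h1]
  have h2 : (Nat.totient m : ℝ) = m * ∏ p ∈ m.primeFactors, (1 - (p : ℝ)⁻¹) := by
    have := Nat.totient_eq_mul_prod_factors m
    have h := congrArg (fun q : ℚ => (q : ℝ)) this
    push_cast at h
    exact h
  have hφ : 0 < (Nat.totient m : ℝ) := by exact_mod_cast Nat.totient_pos.2 hm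
  rw [eq_div_iff hφ.ne', h2, mul_left_comm, ← Finset.prod_mul_distrib, Finset.prod_eq_one, mul_one]
  intro p hp
  have : (1 : ℝ) < p := by exact_mod_cast (Nat.prime_of_mem_primeFactors hp).one_lt
  have h3 : (p : ℝ) - 1 ≠ 0 := by linarith
  have h4 : (p : ℝ) ≠ 0 := by linarith
  field_simp
  ring

/-- Auxiliary: `∑ μ²(d)/(dφ(d))` terms. -/
noncomputable def tmH (d : ℕ) : ℝ := tmG d / d

theorem tmH_nonneg (d : ℕ) : 0 ≤ tmH d := div_nonneg (tmG_nonneg d) (by positivity)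

theorem tmH_le (d : ℕ) : tmH d ≤ 2 * (d : ℝ) ^ (-(7 / 4) : ℝ) := by
  rcases Nat.eq_zero_or_pos d with rfl | hd
  · simp [tmH]
  have hd' : (0 : ℝ) < d := by exact_mod_cast hd
  unfold tmH
  rw [div_le_iff₀ hd']
  have : (d : ℝ) ^ (-(3 / 4) : ℝ) = (d : ℝ) ^ (-(7 / 4) : ℝ) * d := by
    nth_rw 3 [← Real.rpow_one (d : ℝ)]
    rw [← Real.rpow_add hd']; norm_num
  rw [mul_assoc, ← this]
  exact tmG_le d hd

theorem tmH_summable : Summable tmH := by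
  refine Summable.of_nonneg_of_le tmH_nonneg tmH_le ?_
  exact (Real.summable_nat_rpow.2 (by norm_num)).mul_left 2

theorem tmH_mul {m n : ℕ} (h : m.Coprime n) : tmH (m * n) = tmH m * tmH n := by
  unfold tmH tmG
  rw [Nat.totient_mul h]
  by_cases h1 : Squarefree m <;> by_cases h2 : Squarefree n <;>
    simp [Nat.squarefree_mul h, h1, h2]
  ring

theorem tmH_euler : HasProd (fun p : Nat.Primes => 1 + (((p : ℕ) : ℝ) * (((p : ℕ) : ℝ) - 1))⁻¹)
    (∑' n, tmH n) := by
  have h := EulerProduct.eulerProduct_hasProd (f := tmH) (by simp [tmH, tmG])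
    (fun h => tmH_mul h) (by simpa [abs_of_nonneg (tmH_nonneg _)] using tmH_summable) (by simp [tmH])
  refine (congrArg (fun f => HasProd f (∑' n, tmH n)) (funext fun p => ?_)).mpr h
  have hp := p.2
  rw [tsum_eq_sum (s := Finset.range 2)]
  · rw [Finset.sum_range_succ, Finset.sum_range_one]
    simp only [pow_zero, pow_one, tmH, tmG, squarefree_one, if_true, hp.prime.squarefree,
      Nat.totient_prime hp, Nat.cast_pred hp.pos]
    simp
    rw [div_eq_mul_inv, mul_comm]
  · intro e he
    have he2 : 2 ≤ e := by simp at he; omega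
    have : ¬ Squarefree ((p : ℕ) ^ e) := by
      intro h
      have := (Nat.squarefree_pow_iff hp.ne_one (by omega)).1 h
      omega
    simp [tmH, tmG, this]

noncomputable def tmZ (k : ℕ) (hk : k ≠ 0) : ℕ →*₀ ℝ where
  toFun n := ((n : ℝ) ^ k)⁻¹
  map_zero' := by simp [hk]
  map_one' := by simp
  map_mul' a b := by push_cast; rw [mul_pow, mul_inv]

theorem tmZ_euler (k : ℕ) (hk : 2 ≤ k) :
    HasProd (fun p : Nat.Primes => (1 - (((p : ℕ) : ℝ) ^ k)⁻¹)⁻¹)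
      (∑' n : ℕ, ((n + 1 : ℝ) ^ k)⁻¹) := by
  have hs : Summable (fun n : ℕ => ((n : ℝ) ^ k)⁻¹) := Real.summable_nat_pow_inv.2 (by omega)
  have h := EulerProduct.eulerProduct_completely_multiplicative_hasProd
    (f := tmZ k (by omega)) (by
      convert hs using 2 with n
      simp [tmZ])
  have e : ∑' n, tmZ k (by omega) n = ∑' n : ℕ, ((n + 1 : ℝ) ^ k)⁻¹ := by
    change ∑' n : ℕ, ((n : ℝ) ^ k)⁻¹ = _
    rw [hs.tsum_eq_zero_add]
    simp [show k ≠ 0 by omega]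
  rw [e] at h
  exact h

theorem tm_constant : (∑' k : ℕ, ((k + 1 : ℝ) ^ 2)⁻¹) * (∑' k : ℕ, ((k + 1 : ℝ) ^ 3)⁻¹) /
        (∑' k : ℕ, ((k + 1 : ℝ) ^ 6)⁻¹) = ∑' n, tmH n := by
  have h2 := tmZ_euler 2 (by norm_num)
  have h3 := tmZ_euler 3 (by norm_num)
  have h6 := tmZ_euler 6 (by norm_num)
  have hpos : 0 < ∑' k : ℕ, ((k + 1 : ℝ) ^ 6)⁻¹ := by
    have hs : Summable (fun n : ℕ => ((n + 1 : ℝ) ^ 6)⁻¹) := by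
      have := (summable_nat_add_iff 1).2 (Real.summable_nat_pow_inv (p := 6).2 (by norm_num))
      simpa using this
    exact hs.tsum_pos (fun k => by positivity) 0 (by norm_num)
  rw [div_eq_iff hpos.ne']
  refine (h2.mul h3).unique ?_
  convert tmH_euler.mul h6 using 2 with p
  have hp : (1 : ℝ) < (p : ℕ) := by exact_mod_cast p.2.one_lt
  generalize ((p : ℕ) : ℝ) = x at hp
  have a1 : x - 1 ≠ 0 := by linarith
  have a0 : x ≠ 0 := by linarith
  have hh : ∀ k : ℕ, k ≠ 0 → x ^ k - 1 ≠ 0 := fun k hk => by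
    have := one_lt_pow₀ hp hk
    linarith
  have e : ∀ k : ℕ, k ≠ 0 → (1 - (x ^ k)⁻¹)⁻¹ = x ^ k / (x ^ k - 1) := fun k hk => by
    have := hh k hk
    have : x ^ k ≠ 0 := pow_ne_zero _ a0
    rw [← one_div, ← one_div]
    field_simp
  rw [e 2 (by norm_num), e 3 (by norm_num), e 6 (by norm_num)]
  have b2 := hh 2 (by norm_num)
  have b3 := hh 3 (by norm_num)
  have b6 := hh 6 (by norm_num)
  field_simp
  ring

open Finset in
theorem tm_residue_count (P r : ℕ) (hP : 0 < P) (X : ℝ) (hX : 0 ≤ X) :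
    |((#{m ∈ Ioc 0 ⌊X⌋₊ | m ≡ r [MOD P]} : ℕ) : ℝ) - X / P| ≤ 2 := by
  have h := Nat.Ioc_filter_modEq_card 0 ⌊X⌋₊ hP r
  have h' := congrArg (fun z : ℤ => (z : ℚ)) h
  set c := #{m ∈ Ioc 0 ⌊X⌋₊ | m ≡ r [MOD P]}
  have hPq : (0 : ℚ) < P := by exact_mod_cast hP
  have hPr : (0 : ℝ) < P := by exact_mod_cast hP
  have hP1 : (1 : ℝ) ≤ P := by exact_mod_cast hP
  set u : ℚ := ((⌊X⌋₊ : ℚ) - r) / P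
  set v : ℚ := (((0 : ℕ) : ℚ) - r) / P
  have hu1 := Int.floor_le u
  have hu2 := Int.lt_floor_add_one u
  have hv1 := Int.floor_le v
  have hv2 := Int.lt_floor_add_one v
  have huv : u - v = (⌊X⌋₊ : ℚ) / P := by
    simp only [u, v]; push_cast; ring
  have hvu : v ≤ u := by
    have : (0 : ℚ) ≤ (⌊X⌋₊ : ℚ) / P := by positivity
    linarith
  have hfl : ⌊v⌋ ≤ ⌊u⌋ := Int.floor_le_floor hvu
  rw [max_eq_left (by linarith)] at h'
  push_cast at h'
  have hq : |(c : ℚ) - (⌊X⌋₊ : ℚ) / P| ≤ 1 := by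
    rw [abs_le]; constructor <;> linarith
  have hr : |(c : ℝ) - (⌊X⌋₊ : ℝ) / P| ≤ 1 := by
    have := (Rat.cast_le (K := ℝ)).2 hq
    push_cast at this
    exact this
  have hX1 := Nat.floor_le hX
  have hX2 := Nat.lt_floor_add_one X
  have h3 : |(⌊X⌋₊ : ℝ) / P - X / P| ≤ 1 := by
    rw [← sub_div, abs_div, abs_of_pos hPr, div_le_one hPr]
    refine le_trans ?_ hP1
    rw [abs_le]; constructor <;> linarith
  calc |(c : ℝ) - X / P| = |((c : ℝ) - (⌊X⌋₊ : ℝ) / P) + ((⌊X⌋₊ : ℝ) / P - X / P)| := by ring_nf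
    _ ≤ _ := abs_add_le _ _
    _ ≤ 2 := by linarith

/-- The finite set of `0 < m ≤ M` with `m ≤ x h(m)`. -/
noncomputable def tmS (x : ℝ) (h : ℕ → ℝ) (M : ℕ) : Finset ℕ :=
  (Finset.Ioc 0 M).filter (fun m : ℕ => (m : ℝ) ≤ x * h m)

open Finset in
theorem tm_periodic_count (P : ℕ) (hP : 0 < P) (h : ℕ → ℝ) (h0 : ∀ m, 0 ≤ h m)
    (hper : ∀ m, h m = h (m % P)) (x : ℝ) (hx : 0 ≤ x) (M : ℕ) :
    ((#(tmS x h M) : ℕ) : ℝ) ≤ x * ((∑ r ∈ range P, h r) / P) + 2 * P ∧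
    ((∀ r, x * h r ≤ M) →
      x * ((∑ r ∈ range P, h r) / P) - 2 * P ≤ ((#(tmS x h M) : ℕ) : ℝ)) := by
  have hc : #(tmS x h M) = ∑ r ∈ range P,
      #{m ∈ tmS x h M | m % P = r} :=
    Finset.card_eq_sum_card_fiberwise fun m _ => by simpa using Nat.mod_lt m hP
  have hmean : x * ((∑ r ∈ range P, h r) / P) = ∑ r ∈ range P, x * h r / P := by
    rw [← Finset.sum_div, ← Finset.mul_sum, mul_div_assoc]
  have hsub : ∀ r ∈ range P, {m ∈ tmS x h M | m % P = r} ⊆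
      {m ∈ Ioc 0 ⌊x * h r⌋₊ | m ≡ r [MOD P]} := by
    intro r hr m hm
    simp only [tmS, mem_filter, mem_Ioc] at hm ⊢
    obtain ⟨⟨⟨h1, h2⟩, h3⟩, h4⟩ := hm
    rw [hper, h4] at h3
    refine ⟨⟨h1, Nat.le_floor h3⟩, ?_⟩
    rw [Nat.ModEq, h4, Nat.mod_eq_of_lt (mem_range.1 hr)]
  have hsup : (∀ r, x * h r ≤ M) → ∀ r ∈ range P, {m ∈ Ioc 0 ⌊x * h r⌋₊ | m ≡ r [MOD P]} ⊆
      {m ∈ tmS x h M | m % P = r} := by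
    intro hM r hr m hm
    simp only [tmS, mem_filter, mem_Ioc] at hm ⊢
    obtain ⟨⟨h1, h2⟩, h3⟩ := hm
    rw [Nat.ModEq, Nat.mod_eq_of_lt (mem_range.1 hr)] at h3
    have h4 : (m : ℝ) ≤ x * h r := (Nat.le_floor_iff (mul_nonneg hx (h0 r))).1 h2
    refine ⟨⟨⟨h1, ?_⟩, ?_⟩, h3⟩
    · exact_mod_cast h4.trans (hM r)
    · rw [hper, h3]; exact h4
  have hcst : (2 : ℝ) * P = ∑ r ∈ range P, (2 : ℝ) := by simp [mul_comm]
  rw [hmean, hc, hcst, Nat.cast_sum, ← Finset.sum_add_distrib, ← Finset.sum_sub_distrib]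
  constructor
  · refine Finset.sum_le_sum fun r hr => ?_
    have := (abs_le.1 (tm_residue_count P r hP (x * h r) (mul_nonneg hx (h0 r)))).2
    have h2 : ((#{m ∈ tmS x h M | m % P = r} : ℕ) : ℝ) ≤
      ((#{m ∈ Ioc 0 ⌊x * h r⌋₊ | m ≡ r [MOD P]} : ℕ) : ℝ) := by
      exact_mod_cast Finset.card_le_card (hsub r hr)
    linarith
  · intro hM
    refine Finset.sum_le_sum fun r hr => ?_
    have := (abs_le.1 (tm_residue_count P r hP (x * h r) (mul_nonneg hx (h0 r)))).1
    have h2 : ((#{m ∈ Ioc 0 ⌊x * h r⌋₊ | m ≡ r [MOD P]} : ℕ) : ℝ) ≤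
      ((#{m ∈ tmS x h M | m % P = r} : ℕ) : ℝ) := by
      exact_mod_cast Finset.card_le_card (hsup hM r hr)
    linarith

/-- Truncated divisor sum. -/
noncomputable def tmF (y m : ℕ) : ℝ := ∑ d ∈ Finset.Ioc 0 y with d ∣ m, tmG d

theorem tmF_nonneg (y m : ℕ) : 0 ≤ tmF y m := Finset.sum_nonneg fun d _ => tmG_nonneg d

theorem tmF_periodic (y m : ℕ) : tmF y m = tmF y (m % y.factorial) := by
  unfold tmF
  congr 1
  refine Finset.filter_congr fun d hd => ?_
  rw [Finset.mem_Ioc] at hd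
  exact ((Nat.dvd_mod_iff (Nat.dvd_factorial hd.1 hd.2))).symm

open Finset in
theorem tm_card_dvd (P d : ℕ) (hd : 0 < d) (hdP : d ∣ P) :
    #{r ∈ range P | d ∣ r} = P / d := by
  obtain ⟨k, rfl⟩ := hdP
  rw [Nat.mul_div_cancel_left k hd]
  have : {r ∈ range (d * k) | d ∣ r} = (range k).image (fun j => d * j) := by
    ext r
    simp only [mem_filter, mem_range, mem_image]
    constructor
    · rintro ⟨h1, j, rfl⟩
      exact ⟨j, lt_of_mul_lt_mul_left h1 (Nat.zero_le _), rfl⟩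
    · rintro ⟨j, hj, rfl⟩
      exact ⟨Nat.mul_lt_mul_of_pos_left hj hd, dvd_mul_right _ _⟩
  rw [this, card_image_of_injective _ (fun a b h => Nat.eq_of_mul_eq_mul_left hd h), card_range]

open Finset in
theorem tmF_mean (y : ℕ) :
    (∑ r ∈ range y.factorial, tmF y r) / (y.factorial : ℕ) = ∑ d ∈ Ioc 0 y, tmH d := by
  unfold tmF
  simp_rw [Finset.sum_filter]
  rw [Finset.sum_comm, Finset.sum_div]
  refine Finset.sum_congr rfl fun d hd => ?_
  rw [mem_Ioc] at hd
  have hdv := Nat.dvd_factorial hd.1 hd.2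
  rw [← Finset.sum_filter, Finset.sum_const, tm_card_dvd _ d hd.1 hdv, nsmul_eq_mul,
    Nat.cast_div hdv (by exact_mod_cast hd.1.ne')]
  have h1 : (y.factorial : ℝ) ≠ 0 := by exact_mod_cast y.factorial_ne_zero
  have h2 : (d : ℝ) ≠ 0 := by exact_mod_cast hd.1.ne'
  unfold tmH
  field_simp

/-- Tail divisor sum. -/
noncomputable def tmR (y M m : ℕ) : ℝ := ∑ d ∈ Finset.Ioc y M with d ∣ m, tmG d

open Finset in
theorem tmF_add_tmR (y M m : ℕ) (hm : 0 < m) (hM : m ≤ M) :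
    tmF y m + tmR y M m = m / Nat.totient m := by
  rw [← tm_sum_divisors m hm]
  unfold tmF tmR
  rw [← Finset.sum_union]
  · congr 1
    ext d
    simp only [mem_union, mem_filter, mem_Ioc, Nat.mem_divisors]
    constructor
    · rintro (h | h)
      · exact ⟨h.2, hm.ne'⟩
      · exact ⟨h.2, hm.ne'⟩
    · rintro ⟨h, -⟩
      have h1 := Nat.le_of_dvd hm h
      have h2 := Nat.pos_of_dvd_of_pos h hm
      rcases le_or_gt d y with h3 | h3
      · exact Or.inl ⟨⟨h2, h3⟩, h⟩
      · exact Or.inr ⟨⟨h3, h1.trans hM⟩, h⟩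
  · rw [Finset.disjoint_left]
    intro d h1 h2
    simp only [mem_filter, mem_Ioc] at h1 h2
    omega

theorem tmR_nonneg (y M m : ℕ) : 0 ≤ tmR y M m := Finset.sum_nonneg fun d _ => tmG_nonneg d

noncomputable def tmW (d : ℕ) : ℝ := (d : ℝ) ^ (-(5 / 4) : ℝ)

theorem tmW_nonneg (d : ℕ) : 0 ≤ tmW d := by unfold tmW; positivity

theorem tmW_summable : Summable tmW := Real.summable_nat_rpow.2 (by norm_num)

noncomputable def tmD (y : ℕ) : ℝ := ∑' d, tmW d - ∑ d ∈ Finset.range (y + 1), tmW d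

theorem tmD_tendsto : Filter.Tendsto tmD Filter.atTop (nhds 0) := by
  have h := tmW_summable.hasSum.tendsto_sum_nat
  have h1 := (Filter.tendsto_add_atTop_iff_nat 1).2 h
  have h2 := (tendsto_const_nhds (x := ∑' d, tmW d)).sub h1
  rw [sub_self] at h2
  exact h2

theorem tmD_ge (y : ℕ) (s : Finset ℕ) (hs : ∀ d ∈ s, y < d) : ∑ d ∈ s, tmW d ≤ tmD y := by
  unfold tmD
  have hdis : Disjoint s (Finset.range (y + 1)) := by
    rw [Finset.disjoint_left]
    intro d h1 h2
    have := hs d h1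
    rw [Finset.mem_range] at h2
    omega
  have h := tmW_summable.sum_le_tsum (s ∪ Finset.range (y + 1)) (fun d _ => tmW_nonneg d)
  rw [Finset.sum_union hdis] at h
  linarith

theorem tmD_nonneg (y : ℕ) : 0 ≤ tmD y := by
  simpa using tmD_ge y ∅ (by simp)

open Finset in
theorem tmR_sq (y M m : ℕ) :
    tmR y M m ^ 2 ≤ 4 * tmD y * ∑ d ∈ Ioc y M with d ∣ m, (d : ℝ) ^ (-(1 / 4) : ℝ) := by
  have h1 : tmR y M m ≤ ∑ d ∈ Ioc y M with d ∣ m,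
      (2 * (d : ℝ) ^ (-(5 / 8) : ℝ)) * (d : ℝ) ^ (-(1 / 8) : ℝ) := by
    refine Finset.sum_le_sum fun d hd => ?_
    simp only [mem_filter, mem_Ioc] at hd
    have hd0 : 0 < d := by omega
    have hd' : (0 : ℝ) < d := by exact_mod_cast hd0
    rw [mul_assoc, ← Real.rpow_add hd']
    refine (tmG_le d hd0).trans (le_of_eq ?_)
    norm_num
  have h2 := Finset.sum_mul_sq_le_sq_mul_sq {d ∈ Ioc y M | d ∣ m}
    (fun d => 2 * (d : ℝ) ^ (-(5 / 8) : ℝ)) (fun d => (d : ℝ) ^ (-(1 / 8) : ℝ))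
  have h3 : ∑ d ∈ Ioc y M with d ∣ m, (2 * (d : ℝ) ^ (-(5 / 8) : ℝ)) ^ 2 ≤ 4 * tmD y := by
    have := tmD_ge y {d ∈ Ioc y M | d ∣ m} (fun d hd => by
      simp only [mem_filter, mem_Ioc] at hd; exact hd.1.1)
    refine le_trans (le_of_eq ?_) (mul_le_mul_of_nonneg_left this (by norm_num : (0 : ℝ) ≤ 4))
    rw [Finset.mul_sum]
    refine Finset.sum_congr rfl fun d _ => ?_
    rw [mul_pow, ← Real.rpow_natCast, ← Real.rpow_natCast, ← Real.rpow_mul (by positivity)]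
    unfold tmW
    norm_num
  have h4 : ∑ d ∈ Ioc y M with d ∣ m, ((d : ℝ) ^ (-(1 / 8) : ℝ)) ^ 2 =
      ∑ d ∈ Ioc y M with d ∣ m, (d : ℝ) ^ (-(1 / 4) : ℝ) := by
    refine Finset.sum_congr rfl fun d _ => ?_
    rw [← Real.rpow_natCast, ← Real.rpow_mul (by positivity)]
    norm_num
  rw [h4] at h2
  calc tmR y M m ^ 2 ≤ _ := pow_le_pow_left₀ (tmR_nonneg _ _ _) h1 2
    _ ≤ _ := h2
    _ ≤ _ := mul_le_mul_of_nonneg_right h3 (Finset.sum_nonneg fun d _ => by positivity)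

open Finset in
theorem tm_sum_multiples (N M d : ℕ) (hd : 0 < d) (hN : 0 < N) :
    ∑ m ∈ Ioc N M with d ∣ m, ((m : ℝ) ^ 2)⁻¹ ≤ 2 / (d * N) := by
  have hd' : (0 : ℝ) < d := by exact_mod_cast hd
  have hN' : (0 : ℝ) < N := by exact_mod_cast hN
  have hsub : {m ∈ Ioc N M | d ∣ m} ⊆ (Ioo (N / d) (M + 1)).image (fun j => d * j) := by
    intro m hm
    simp only [mem_filter, mem_Ioc] at hm
    obtain ⟨⟨h1, h2⟩, j, rfl⟩ := hm
    refine mem_image.2 ⟨j, ?_, rfl⟩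
    rw [mem_Ioo]
    constructor
    · rw [Nat.div_lt_iff_lt_mul hd, mul_comm]; exact h1
    · have : j ≤ d * j := Nat.le_mul_of_pos_left j hd
      omega
  calc ∑ m ∈ Ioc N M with d ∣ m, ((m : ℝ) ^ 2)⁻¹
      ≤ ∑ m ∈ (Ioo (N / d) (M + 1)).image (fun j => d * j), ((m : ℝ) ^ 2)⁻¹ :=
        Finset.sum_le_sum_of_subset_of_nonneg hsub fun _ _ _ => by positivity
    _ = ∑ j ∈ Ioo (N / d) (M + 1), (((d * j : ℕ) : ℝ) ^ 2)⁻¹ :=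
        Finset.sum_image fun a _ b _ h => Nat.eq_of_mul_eq_mul_left hd h
    _ = ((d : ℝ) ^ 2)⁻¹ * ∑ j ∈ Ioo (N / d) (M + 1), ((j : ℝ) ^ 2)⁻¹ := by
        rw [Finset.mul_sum]
        refine Finset.sum_congr rfl fun j _ => ?_
        push_cast
        rw [mul_pow, mul_inv]
    _ ≤ ((d : ℝ) ^ 2)⁻¹ * (2 / ((N / d : ℕ) + 1)) :=
        mul_le_mul_of_nonneg_left (sum_Ioo_inv_sq_le _ _) (by positivity)
    _ ≤ 2 / (d * N) := by
        have h : (N : ℝ) ≤ d * ((N / d : ℕ) + 1) := by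
          have := Nat.lt_mul_div_succ N hd
          exact_mod_cast this.le
        rw [← div_eq_inv_mul, div_div]
        refine div_le_div_of_nonneg_left (by norm_num) (by positivity) ?_
        nlinarith

open Finset in
theorem tm_extras (y N M : ℕ) (hN : 0 < N) (ε : ℝ) (hε : 0 < ε) (E : Finset ℕ)
    (hE : ∀ m ∈ E, N < m ∧ m ≤ M ∧ ε * m ≤ 2 * (N * tmR y M m)) :
    (#E : ℝ) ≤ 32 * tmD y ^ 2 / ε ^ 2 * N := by
  have hN' : (0 : ℝ) < N := by exact_mod_cast hN
  have hD := tmD_nonneg y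
  have hEs : E ⊆ Ioc N M := fun m hm => mem_Ioc.2 ⟨(hE m hm).1, (hE m hm).2.1⟩
  have key : ∀ m ∈ E, (1 : ℝ) ≤ (4 * N ^ 2 / ε ^ 2) * (tmR y M m ^ 2 * ((m : ℝ) ^ 2)⁻¹) := by
    intro m hm
    obtain ⟨h1, h2, h3⟩ := hE m hm
    have hm' : (0 : ℝ) < m := by exact_mod_cast (by omega : 0 < m)
    have h4 : (ε * m) ^ 2 ≤ (2 * (N * tmR y M m)) ^ 2 := pow_le_pow_left₀ (by positivity) h3 2
    have : (4 * N ^ 2 / ε ^ 2) * (tmR y M m ^ 2 * ((m : ℝ) ^ 2)⁻¹) =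
      (2 * (N * tmR y M m)) ^ 2 / (ε * m) ^ 2 := by
      field_simp
      ring
    rw [this, le_div_iff₀ (by positivity)]
    linarith
  have hsum : ∑ m ∈ Ioc N M, tmR y M m ^ 2 * ((m : ℝ) ^ 2)⁻¹ ≤ 4 * tmD y * (2 / N * tmD y) := by
    calc ∑ m ∈ Ioc N M, tmR y M m ^ 2 * ((m : ℝ) ^ 2)⁻¹
        ≤ ∑ m ∈ Ioc N M, (4 * tmD y * ∑ d ∈ Ioc y M with d ∣ m, (d : ℝ) ^ (-(1 / 4) : ℝ)) *
            ((m : ℝ) ^ 2)⁻¹ :=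
          Finset.sum_le_sum fun m _ => mul_le_mul_of_nonneg_right (tmR_sq y M m) (by positivity)
      _ = 4 * tmD y * ∑ m ∈ Ioc N M, ∑ d ∈ Ioc y M,
            if d ∣ m then (d : ℝ) ^ (-(1 / 4) : ℝ) * ((m : ℝ) ^ 2)⁻¹ else 0 := by
          rw [Finset.mul_sum]
          refine Finset.sum_congr rfl fun m _ => ?_
          rw [mul_assoc, Finset.sum_mul, Finset.sum_filter]
      _ = 4 * tmD y * ∑ d ∈ Ioc y M, (d : ℝ) ^ (-(1 / 4) : ℝ) *
            ∑ m ∈ Ioc N M with d ∣ m, ((m : ℝ) ^ 2)⁻¹ := by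
          rw [Finset.sum_comm]
          congr 1
          refine Finset.sum_congr rfl fun d _ => ?_
          rw [← Finset.sum_filter, Finset.mul_sum]
      _ ≤ 4 * tmD y * ∑ d ∈ Ioc y M, 2 / N * tmW d := by
          refine mul_le_mul_of_nonneg_left (Finset.sum_le_sum fun d hd => ?_) (by positivity)
          have hd0 : 0 < d := by have := mem_Ioc.1 hd; omega
          have hd' : (0 : ℝ) < d := by exact_mod_cast hd0
          refine (mul_le_mul_of_nonneg_left (tm_sum_multiples N M d hd0 hN)
            (by positivity)).trans (le_of_eq ?_)
          have e : (d : ℝ) ^ (-(1 / 4) : ℝ) = tmW d * d := by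
            unfold tmW
            nth_rw 3 [← Real.rpow_one (d : ℝ)]
            rw [← Real.rpow_add hd']; norm_num
          rw [e]
          field_simp
      _ ≤ _ := by
          rw [← Finset.mul_sum]
          have := tmD_ge y (Ioc y M) (fun d hd => (mem_Ioc.1 hd).1)
          gcongr
  calc (#E : ℝ) = ∑ m ∈ E, (1 : ℝ) := by simp
    _ ≤ ∑ m ∈ E, (4 * N ^ 2 / ε ^ 2) * (tmR y M m ^ 2 * ((m : ℝ) ^ 2)⁻¹) := Finset.sum_le_sum key
    _ ≤ ∑ m ∈ Ioc N M, (4 * N ^ 2 / ε ^ 2) * (tmR y M m ^ 2 * ((m : ℝ) ^ 2)⁻¹) :=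
        Finset.sum_le_sum_of_subset_of_nonneg hEs fun _ _ _ => by positivity
    _ = (4 * N ^ 2 / ε ^ 2) * ∑ m ∈ Ioc N M, tmR y M m ^ 2 * ((m : ℝ) ^ 2)⁻¹ := by
        rw [Finset.mul_sum]
    _ ≤ (4 * N ^ 2 / ε ^ 2) * (4 * tmD y * (2 / N * tmD y)) :=
        mul_le_mul_of_nonneg_left hsum (by positivity)
    _ = _ := by field_simp; ring

/-- The set of `m > 0` with `φ(m) ≤ N`. -/
def tmA (N : ℕ) : Finset ℕ := (Finset.Ioc 0 (N ^ 4 * 16)).filter (fun m => Nat.totient m ≤ N)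

theorem mem_tmA {N m : ℕ} : m ∈ tmA N ↔ 0 < m ∧ Nat.totient m ≤ N := by
  simp only [tmA, Finset.mem_filter, Finset.mem_Ioc]
  exact ⟨fun h => ⟨h.1.1, h.2⟩, fun h => ⟨⟨h.1, tm_le_of_totient_le h.2⟩, h.2⟩⟩

open Finset in
theorem tm_sum_eq (N : ℕ) : ∑ n ∈ Icc 1 N, totientFiberCard n = #(tmA N) := by
  rw [Finset.card_eq_sum_card_fiberwise (f := Nat.totient) (t := Icc 1 N)]
  · refine Finset.sum_congr rfl fun n hn => ?_
    rw [mem_Icc] at hn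
    unfold totientFiberCard
    rw [← Nat.card_eq_finsetCard]
    refine Nat.card_congr (Equiv.subtypeEquivRight fun m => ?_)
    rw [mem_filter, mem_tmA]
    constructor
    · rintro ⟨h1, h2⟩
      exact ⟨⟨h1, by omega⟩, h2⟩
    · rintro ⟨⟨h1, -⟩, h2⟩
      exact ⟨h1, h2⟩
  · intro m hm
    have := mem_tmA.1 hm
    have h := Nat.totient_pos.2 this.1
    simp only [coe_Icc, Set.mem_Icc]
    exact ⟨h, this.2⟩

open Finset in
theorem tm_lower (y N : ℕ) :
    N * ∑ d ∈ Ioc 0 y, tmH d - 2 * (y.factorial : ℕ) ≤ (#(tmA N) : ℝ) := by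
  obtain ⟨M, hM⟩ : ∃ M : ℕ, ∀ r, (N : ℝ) * tmF y r ≤ M := by
    obtain ⟨M, hM⟩ := exists_nat_ge ((N : ℝ) * ∑ d ∈ Ioc 0 y, tmG d)
    refine ⟨M, fun r => le_trans (mul_le_mul_of_nonneg_left ?_ (by positivity)) hM⟩
    exact Finset.sum_le_sum_of_subset_of_nonneg (Finset.filter_subset _ _)
      fun d _ _ => tmG_nonneg d
  have h := (tm_periodic_count y.factorial y.factorial_pos (tmF y) (tmF_nonneg y)
    (tmF_periodic y) N (by positivity) M).2 hM
  rw [tmF_mean] at h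
  refine h.trans ?_
  have : tmS N (tmF y) M ⊆ tmA N := by
    intro m hm
    simp only [tmS, mem_filter, mem_Ioc] at hm
    obtain ⟨⟨h1, h2⟩, h3⟩ := hm
    rw [mem_tmA]
    refine ⟨h1, ?_⟩
    have e := tmF_add_tmR y M m h1 h2
    have e2 := tmR_nonneg y M m
    have hφ : 0 < (Nat.totient m : ℝ) := by exact_mod_cast Nat.totient_pos.2 h1
    have hm' : (0 : ℝ) < m := by exact_mod_cast h1
    have h4 : (m : ℝ) ≤ N * (m / Nat.totient m) :=
      h3.trans (mul_le_mul_of_nonneg_left (by linarith) (by positivity))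
    rw [← mul_div_assoc, le_div_iff₀ hφ, mul_comm] at h4
    exact_mod_cast le_of_mul_le_mul_right h4 hm'
  exact_mod_cast Finset.card_le_card this

open Finset in
theorem tm_upper (y N : ℕ) (hy : 0 < y) (hN : 0 < N) (ε : ℝ) (hε : 0 < ε) (hε1 : ε ≤ 1) :
    (#(tmA N) : ℝ) ≤ N * (1 + ε) * ∑ d ∈ Ioc 0 y, tmH d + 2 * (y.factorial : ℕ) +
      32 * tmD y ^ 2 / ε ^ 2 * N := by
  set M := N ^ 4 * 16 with hMdef
  have hN' : (0 : ℝ) < N := by exact_mod_cast hN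
  have h := (tm_periodic_count y.factorial y.factorial_pos (tmF y) (tmF_nonneg y)
    (tmF_periodic y) (N * (1 + ε)) (by positivity) M).1
  rw [tmF_mean] at h
  have h2 := tm_extras y N M hN ε hε (tmA N \ tmS (N * (1 + ε)) (tmF y) M) (by
    intro m hm
    rw [mem_sdiff] at hm
    obtain ⟨h1, h2⟩ := hm
    have hA := mem_tmA.1 h1
    have hmM : m ≤ M := tm_le_of_totient_le hA.2
    have h3 : N * (1 + ε) * tmF y m < m := by
      by_contra hcon
      push Not at hcon
      exact h2 (by simp only [tmS, mem_filter, mem_Ioc]; exact ⟨⟨hA.1, hmM⟩, hcon⟩)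
    have hφ : 0 < (Nat.totient m : ℝ) := by exact_mod_cast Nat.totient_pos.2 hA.1
    have hm' : (0 : ℝ) < m := by exact_mod_cast hA.1
    have hφN : (Nat.totient m : ℝ) ≤ N := by exact_mod_cast hA.2
    have e := tmF_add_tmR y M m hA.1 hmM
    have h4 : (m : ℝ) ≤ N * tmF y m + N * tmR y M m := by
      rw [← mul_add, e, ← mul_div_assoc, le_div_iff₀ hφ, mul_comm]
      exact mul_le_mul_of_nonneg_right hφN hm'.le
    have h5 : 1 ≤ tmF y m := by
      have : tmG 1 = 1 := by simp [tmG]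
      rw [← this]
      exact Finset.single_le_sum (f := tmG) (fun d _ => tmG_nonneg d)
        (by simp only [mem_filter, mem_Ioc]; exact ⟨⟨by norm_num, hy⟩, one_dvd _⟩)
    have h6 : (N : ℝ) * 1 ≤ N * tmF y m := mul_le_mul_of_nonneg_left h5 hN'.le
    have hr : 0 ≤ (N : ℝ) * tmR y M m := mul_nonneg hN'.le (tmR_nonneg _ _ _)
    refine ⟨?_, hmM, ?_⟩
    · have : (N : ℝ) < m := by nlinarith
      exact_mod_cast this
    · generalize (N : ℝ) * tmR y M m = R at *
      have h3' : (1 + ε) * (N * tmF y m) < m := by linarith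
      generalize (N : ℝ) * tmF y m = F at *
      nlinarith)
  have h3 : #(tmA N) ≤ #(tmA N \ tmS (N * (1 + ε)) (tmF y) M) + #(tmS (N * (1 + ε)) (tmF y) M) := by
    have := Finset.le_card_sdiff (tmS (N * (1 + ε)) (tmF y) M) (tmA N)
    omega
  have h4 : (#(tmA N) : ℝ) ≤ #(tmA N \ tmS (N * (1 + ε)) (tmF y) M) +
    #(tmS (N * (1 + ε)) (tmF y) M) := by exact_mod_cast h3
  linarith

theorem tm_partial_tendsto : Filter.Tendsto (fun y : ℕ => ∑ d ∈ Finset.Ioc 0 y, tmH d)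
    Filter.atTop (nhds (∑' n, tmH n)) := by
  have h := (Filter.tendsto_add_atTop_iff_nat 1).2 tmH_summable.hasSum.tendsto_sum_nat
  refine h.congr fun y => ?_
  have : Finset.range (y + 1) = insert 0 (Finset.Ioc 0 y) := by
    ext x; simp only [Finset.mem_range, Finset.mem_insert, Finset.mem_Ioc]; omega
  rw [this, Finset.sum_insert (by simp)]
  simp [tmH]

theorem tm_main : Filter.Tendsto (fun N : ℕ => ((tmA N).card : ℝ) / N) Filter.atTop
    (nhds (∑' n, tmH n)) := by
  have hinv : ∀ c : ℝ, Filter.Tendsto (fun N : ℕ => c / (N : ℝ)) Filter.atTop (nhds 0) :=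
    fun c => tendsto_const_div_atTop_nhds_zero_nat c
  have ha0 : 0 ≤ ∑' n, tmH n := tsum_nonneg tmH_nonneg
  rw [tendsto_order]
  constructor
  · intro b hb
    obtain ⟨y, hy⟩ := (tm_partial_tendsto.eventually_const_lt hb).exists
    have h1 := (tendsto_const_nhds (x := ∑ d ∈ Finset.Ioc 0 y, tmH d)).sub
      (hinv (2 * (y.factorial : ℕ)))
    rw [sub_zero] at h1
    filter_upwards [h1.eventually_const_lt hy, Filter.eventually_gt_atTop 0] with N h2 hN
    have hN' : (0 : ℝ) < N := by exact_mod_cast hN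
    refine h2.trans_le ?_
    rw [le_div_iff₀ hN', sub_mul, div_mul_cancel₀ _ hN'.ne', mul_comm]
    exact tm_lower y N
  · intro b hb
    set a := ∑' n, tmH n
    obtain ⟨ε, hε, hε1, hεa⟩ : ∃ ε : ℝ, 0 < ε ∧ ε ≤ 1 ∧ (1 + ε) * a < b := by
      have hc : Filter.Tendsto (fun ε : ℝ => (1 + ε) * a) (nhdsWithin 0 (Set.Ioi 0)) (nhds a) := by
        have : Continuous (fun ε : ℝ => (1 + ε) * a) := by fun_prop
        have h := this.tendsto 0
        simp only [add_zero, one_mul] at h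
        exact h.mono_left nhdsWithin_le_nhds
      have h1 := hc.eventually_lt_const hb
      have h2 : ∀ᶠ ε : ℝ in nhdsWithin 0 (Set.Ioi 0), ε ∈ Set.Ioc (0 : ℝ) 1 :=
        Ioc_mem_nhdsGT one_pos
      obtain ⟨ε, h3, h4⟩ := (h1.and h2).exists
      exact ⟨ε, h4.1, h4.2, h3⟩
    have hD : Filter.Tendsto (fun y => (1 + ε) * a + 32 * tmD y ^ 2 / ε ^ 2) Filter.atTop
        (nhds ((1 + ε) * a)) := by
      have h := (((tmD_tendsto.pow 2).const_mul 32).div_const (ε ^ 2)).const_add ((1 + ε) * a)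
      simpa using h
    obtain ⟨y, hy, hy0⟩ := ((hD.eventually_lt_const hεa).and
      (Filter.eventually_gt_atTop 0)).exists
    have h1 := (hinv (2 * (y.factorial : ℕ))).const_add ((1 + ε) * a + 32 * tmD y ^ 2 / ε ^ 2)
    rw [add_zero] at h1
    filter_upwards [h1.eventually_lt_const hy, Filter.eventually_gt_atTop 0] with N h2 hN
    have hN' : (0 : ℝ) < N := by exact_mod_cast hN
    refine lt_of_le_of_lt ?_ h2
    rw [div_le_iff₀ hN', add_mul, div_mul_cancel₀ _ hN'.ne', add_mul]
    have h3 := tm_upper y N hy0 hN ε hε hε1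
    have h4 : ∑ d ∈ Finset.Ioc 0 y, tmH d ≤ a :=
      tmH_summable.sum_le_tsum _ fun d _ => tmH_nonneg d
    have h5 : N * (1 + ε) * ∑ d ∈ Finset.Ioc 0 y, tmH d ≤ N * (1 + ε) * a :=
      mul_le_mul_of_nonneg_left h4 (by positivity)
    linarith

theorem totient_multiplicity_mean_value :
    Filter.Tendsto
      (fun N : ℕ => (1 / (N : ℝ)) * ∑ n ∈ Finset.Icc 1 N, (totientFiberCard n : ℝ))
      Filter.atTop
      (nhds ((∑' k : ℕ, ((k + 1 : ℝ) ^ 2)⁻¹) * (∑' k : ℕ, ((k + 1 : ℝ) ^ 3)⁻¹) /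
        (∑' k : ℕ, ((k + 1 : ℝ) ^ 6)⁻¹))) := by
  rw [tm_constant]
  refine tm_main.congr fun N => ?_
  rw [← Nat.cast_sum, tm_sum_eq, one_div, div_eq_inv_mul]
end
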